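/- arXiv:2502.07198 — 3 statements merged into one kernel-verified Lean document; each statement's English description precedes it below -/
import Mathlib

section
/- The Hasse diagram of the cyclic Tamari lattice is an n-regular graph: for every 312-avoiding TITO x, the number of 312-avoiding TITOs covered by x plus the number of 312-avoiding TITOs covering x (covers taken in the poset of 312-avoiding TITOs under the Dyer order) equals n. -/
structure TITO (n : ℕ) where
  rel : ℤ → ℤ → Prop
  refl : ∀ a, rel a a
  antisymm : ∀ a b, rel a b → rel b a → a = b
  trans : ∀ a b c, rel a b → rel b c → rel a c
  total : ∀ a b, rel a b ∨ rel b a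
  invariant : ∀ a b, rel a b ↔ rel (a + n) (b + n)

namespace TITO

variable {n : ℕ}

/-- The inversion set of a TITO. -/
def Inversions (t : TITO n) : Set (ℤ × ℤ) := {p | p.1 < p.2 ∧ t.rel p.2 p.1}

/-- A TITO is 312-avoiding if there are no integers `a < b < c` with `c ≼ a` and `a ≼ b`. -/
def Avoids312 (t : TITO n) : Prop :=
  ¬ ∃ a b c : ℤ, a < b ∧ b < c ∧ t.rel c a ∧ t.rel a b

/-- A TITO is 132-avoiding if there are no integers `a < b < c` with `a ≼ c` and `c ≼ b`. -/
def Avoids132 (t : TITO n) : Prop :=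
  ¬ ∃ a b c : ℤ, a < b ∧ b < c ∧ t.rel a c ∧ t.rel c b

/-- A set is order-convex for a TITO. -/
def OrderConvex (t : TITO n) (S : Set ℤ) : Prop :=
  ∀ x ∈ S, ∀ z ∈ S, ∀ y : ℤ, t.rel x y → t.rel y z → y ∈ S

/-- A block of a TITO: an order-convex set with no minimal and no maximal element in which
all intervals are finite. -/
def IsBlock (t : TITO n) (I : Set ℤ) : Prop :=
  t.OrderConvex I ∧
  (∀ a ∈ I, ∃ b ∈ I, b ≠ a ∧ t.rel b a) ∧
  (∀ a ∈ I, ∃ b ∈ I, b ≠ a ∧ t.rel a b) ∧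
  (∀ a ∈ I, ∀ c ∈ I, t.rel a c → {b : ℤ | t.rel a b ∧ t.rel b c}.Finite)

/-- A block is waxing if `a ≼ a + n` for every `a` in it. -/
def Waxing (t : TITO n) (I : Set ℤ) : Prop := ∀ a ∈ I, t.rel a (a + n)

/-- A block is waning if `a + n ≼ a` for every `a` in it. -/
def Waning (t : TITO n) (I : Set ℤ) : Prop := ∀ a ∈ I, t.rel (a + n) a

/-- A TITO is real if `a ≼ a + n` whenever the residue class of `a` mod `n` is order-convex. -/
def IsReal (t : TITO n) : Prop :=
  ∀ a : ℤ, t.OrderConvex {x : ℤ | ∃ k : ℤ, x = a + k * n} → t.rel a (a + n)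

/-- A TITO is co-real if `a + n ≼ a` whenever the residue class of `a` mod `n` is order-convex. -/
def IsCoReal (t : TITO n) : Prop :=
  ∀ a : ℤ, t.OrderConvex {x : ℤ | ∃ k : ℤ, x = a + k * n} → t.rel (a + n) a

/-- `(a, b)` with `a < b` is a lower wall if `b ≼ a` is a cover relation of the total order. -/
def LowerWall (t : TITO n) (a b : ℤ) : Prop :=
  a < b ∧ t.rel b a ∧ ∀ z : ℤ, z ≠ a → z ≠ b → ¬ (t.rel b z ∧ t.rel z a)

end TITO

/-- `y` covers `x` within the subposet `P` of TITOs ordered by the Dyer order. -/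
def CoversIn {n : ℕ} (P : Set (TITO n)) (x y : TITO n) : Prop :=
  x ∈ P ∧ y ∈ P ∧ x.Inversions ⊂ y.Inversions ∧
    ¬ ∃ z ∈ P, x.Inversions ⊂ z.Inversions ∧ z.Inversions ⊂ y.Inversions

/-!
A 312-avoiding TITO is encoded by its *bracket vector* `r : ℤ → ℤ ∪ {∞}`: since it avoids `312`,
the integers `b ≥ a` with `b ≼ a` form an interval `[a, r a]`. The vectors that arise are the
`n`-periodic ones satisfying `r b ≤ r a` whenever `a ≤ b ≤ r a`, and the Dyer order becomes the
pointwise order. Call `i` *first* if `r` takes the value `r i` at no `p < i`. Each residue class of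
first integers gives one upper cover: `r i` is raised to `r (r i + 1)`, or to `∞` if that value is
at least `i + n`. Each residue class of other integers gives one lower cover: if `p` is the largest
integer below `i` with `r p = r i`, then `r p` is lowered to `i - 1`. So the covers of `r` are in
bijection with `ℤ / n`.
-/

section Order

variable {α ι : Type*} [PartialOrder α] {x : α} {u : ι → α}

lemma ncard_setOf_covBy_eq_card (lt_u : ∀ i, x < u i) (exists_u_le : ∀ y, x < y → ∃ i, u i ≤ y)
    (eq_of_u_le : ∀ i j, u i ≤ u j → i = j) : {y | x ⋖ y}.ncard = Nat.card ι := by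
  have u_injective : Function.Injective u := fun i j hij ↦ eq_of_u_le i j hij.le
  have covers_eq_range : {y | x ⋖ y} = Set.range u := by
    ext y
    constructor
    · intro hxy
      obtain ⟨i, hi⟩ := exists_u_le y hxy.lt
      exact ⟨i, hi.eq_of_not_lt (hxy.2 (lt_u i))⟩
    · rintro ⟨i, rfl⟩
      refine ⟨lt_u i, fun z hxz hzi ↦ ?_⟩
      obtain ⟨j, hj⟩ := exists_u_le z hxz
      obtain rfl := eq_of_u_le j i (hj.trans hzi.le)
      exact hzi.not_ge hj
  rw [covers_eq_range, Set.ncard_range_of_injective u_injective]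

lemma ncard_setOf_covBy_eq_card' (u_lt : ∀ i, u i < x) (exists_le_u : ∀ y, y < x → ∃ i, y ≤ u i)
    (eq_of_u_le : ∀ i j, u i ≤ u j → i = j) : {y | y ⋖ x}.ncard = Nat.card ι := by
  have dual_count : {y : αᵒᵈ | OrderDual.toDual x ⋖ y}.ncard = Nat.card ι :=
    ncard_setOf_covBy_eq_card (u := OrderDual.toDual ∘ u) u_lt exists_le_u
      fun i j hij ↦ (eq_of_u_le j i hij).symm
  rw [← dual_count]
  exact congrArg Set.ncard (Set.ext fun y ↦ toDual_covBy_toDual_iff.symm)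

end Order

lemma exists_forall_mem_iff_coe_le {S : Set ℤ} (hS : IsLowerSet S) (hne : S.Nonempty) :
    ∃ v : WithTop ℤ, ∀ b : ℤ, b ∈ S ↔ (b : WithTop ℤ) ≤ v := by
  by_cases hbdd : BddAbove S
  · obtain ⟨m, hm, hmax⟩ := Int.exists_greatest_of_bdd (P := (· ∈ S)) hbdd hne
    refine ⟨m, fun b ↦ ⟨fun hb ↦ by exact_mod_cast hmax b hb, fun hb ↦ ?_⟩⟩
    exact hS (by exact_mod_cast hb) hm
  · refine ⟨⊤, fun b ↦ ⟨fun _ ↦ le_top, fun _ ↦ ?_⟩⟩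
    obtain ⟨c, hc, hbc⟩ := not_bddAbove_iff.1 hbdd b
    exact hS hbc.le hc

lemma coe_add_le_add_coe_iff {b m : ℤ} {v : WithTop ℤ} :
    ((b + m : ℤ) : WithTop ℤ) ≤ v + (m : WithTop ℤ) ↔ (b : WithTop ℤ) ≤ v := by
  rw [WithTop.coe_add, WithTop.add_le_add_iff_right WithTop.coe_ne_top]

lemma coe_add_one_le_of_lt {e : ℤ} {v : WithTop ℤ} (h : (e : WithTop ℤ) < v) :
    ((e + 1 : ℤ) : WithTop ℤ) ≤ v := by
  cases v with
  | top => exact le_top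
  | coe v => exact_mod_cast h

lemma le_coe_sub_one_of_lt {i : ℤ} {v : WithTop ℤ} (h : v < (i : WithTop ℤ)) :
    v ≤ ((i - 1 : ℤ) : WithTop ℤ) := by
  lift v to ℤ using h.ne_top
  exact_mod_cast Int.le_sub_one_of_lt (by exact_mod_cast h)

lemma exists_eq_add_of_dvd_sub {n a i : ℤ} (ha : n ∣ a - i) : ∃ m, n ∣ m ∧ a = i + m :=
  ⟨a - i, ha, by ring⟩

lemma exists_mem_Ico_eq_add {n : ℕ} [NeZero n] (i : ℤ) :
    ∃ j ∈ Set.Ico (0 : ℤ) n, ∃ m, (n : ℤ) ∣ m ∧ j = i + m := by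
  have hn : 0 < (n : ℤ) := by exact_mod_cast NeZero.pos n
  refine ⟨i % n, ⟨Int.emod_nonneg _ hn.ne', Int.emod_lt_of_pos _ hn⟩, ?_⟩
  exact exists_eq_add_of_dvd_sub (Int.mod_modEq i n).symm.dvd

lemma eq_of_mem_Ico_of_dvd_sub {n i j : ℤ} (hi : i ∈ Set.Ico 0 n) (hj : j ∈ Set.Ico 0 n)
    (h : n ∣ i - j) : i = j := by
  rw [Set.mem_Ico] at hi hj
  exact sub_eq_zero.1 (Int.eq_zero_of_abs_lt_dvd h (by rw [abs_lt]; omega))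

/-- Bracket vectors of period `n`. The value `reach a` is the right end of the interval of
integers `b ≥ a` that come weakly before `a` in the corresponding 312-avoiding TITO, and `⊤` if
that interval is unbounded. -/
structure BracketVector (n : ℕ) where
  reach : ℤ → WithTop ℤ
  le_reach : ∀ a : ℤ, a ≤ reach a
  reach_le_reach : ∀ a b : ℤ, a ≤ b → b ≤ reach a → reach b ≤ reach a
  reach_add : ∀ a : ℤ, reach (a + n) = reach a + ((n : ℤ) : WithTop ℤ)

namespace BracketVector

variable {n : ℕ}

instance : FunLike (BracketVector n) ℤ (WithTop ℤ) where
  coe := reach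
  coe_injective := by
    rintro ⟨r, _, _, _⟩ ⟨s, _, _, _⟩ rfl
    rfl

noncomputable instance : PartialOrder (BracketVector n) :=
  PartialOrder.lift (fun r ↦ (r : ℤ → WithTop ℤ)) DFunLike.coe_injective

variable {r s : BracketVector n} {a b e i j m p : ℤ} {v w : WithTop ℤ}

lemma le_def : r ≤ s ↔ ∀ a, r a ≤ s a := Iff.rfl

lemma lt_iff_le_and_exists_lt : r < s ↔ r ≤ s ∧ ∃ a, r a < s a := Pi.lt_def

lemma le_apply (r : BracketVector n) (a : ℤ) : (a : WithTop ℤ) ≤ r a := r.le_reach a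

lemma apply_le_apply (hab : a ≤ b) (hb : b ≤ r a) : r b ≤ r a := r.reach_le_reach a b hab hb

lemma apply_add_nat_mul (r : BracketVector n) (a : ℤ) (k : ℕ) :
    r (a + k * n) = r a + ((k * n : ℤ) : WithTop ℤ) := by
  induction k with
  | zero => simp
  | succ k ih =>
    calc
      r (a + (k + 1 : ℕ) * n) = r (a + k * n + n) := by
        rw [Nat.cast_succ, add_one_mul, add_assoc]
      _ = r (a + k * n) + ((n : ℤ) : WithTop ℤ) := r.reach_add _
      _ = r a + (((k + 1 : ℕ) * n : ℤ) : WithTop ℤ) := by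
        rw [ih, add_assoc, ← WithTop.coe_add, Nat.cast_succ, add_one_mul]

lemma apply_add_of_dvd (hm : (n : ℤ) ∣ m) : r (a + m) = r a + (m : WithTop ℤ) := by
  obtain ⟨c, rfl⟩ := hm
  obtain ⟨k, rfl | rfl⟩ := c.eq_nat_or_neg
  · rw [mul_comm, apply_add_nat_mul]
  · have shift_back := r.apply_add_nat_mul (a + n * -k) k
    rw [show a + n * -k + k * n = a by ring] at shift_back
    rw [shift_back, add_assoc, ← WithTop.coe_add]
    simp [mul_comm]

lemma apply_add_lt_apply_add (hm : (n : ℤ) ∣ m) (h : r a < s a) : r (a + m) < s (a + m) := by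
  rw [apply_add_of_dvd hm, apply_add_of_dvd hm]
  exact WithTop.add_lt_add_right WithTop.coe_ne_top h

lemma apply_add_eq_apply_add_iff (hm : (n : ℤ) ∣ m) : r (a + m) = r (b + m) ↔ r a = r b := by
  rw [apply_add_of_dvd hm, apply_add_of_dvd hm]
  exact WithTop.add_right_inj WithTop.coe_ne_top

lemma apply_eq_top_of_add_le [NeZero n] (h : ((a + n : ℤ) : WithTop ℤ) ≤ r a) : r a = ⊤ := by
  have hn : 0 < (n : ℤ) := by exact_mod_cast NeZero.pos n
  by_contra hne
  obtain ⟨e, he⟩ := WithTop.ne_top_iff_exists.1 hne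
  have apply_add_le := apply_le_apply (by omega) h
  rw [apply_add_of_dvd dvd_rfl, ← he] at apply_add_le
  have : e + n ≤ e := by exact_mod_cast apply_add_le
  omega

lemma le_of_apply_eq (he : r a = e) : a ≤ e := by
  have := r.le_apply a
  rw [he] at this
  exact_mod_cast this

lemma lt_add_of_apply_eq [NeZero n] (he : r a = e) : e < a + n := by
  by_contra! hle
  have : r a = ⊤ := apply_eq_top_of_add_le (by rw [he]; exact_mod_cast hle)
  simp [this] at he

/-! ### Changing one residue class of entries -/

/-- The conditions under which a bracket vector stays one when its value at `i` is replaced by `v`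
and its values on the residue class of `i` are changed accordingly. -/
structure Admissible (r : BracketVector n) (i : ℤ) (v : WithTop ℤ) : Prop where
  le : i ≤ v
  eq_top_or_lt : v = ⊤ ∨ v < (i + n : ℤ)
  le_of_lt : ∀ a < i, i ≤ r a → v ≤ r a
  apply_le : ∀ b : ℤ, i < b → b ≤ v → r b ≤ v

/-- The function that maps `i + m` to `v + m` for every multiple `m` of `n`, and agrees with `r`
off the residue class of `i`. -/
def updateFun (r : BracketVector n) (i : ℤ) (v : WithTop ℤ) (a : ℤ) : WithTop ℤ :=
  if (n : ℤ) ∣ a - i then v + ((a - i : ℤ) : WithTop ℤ) else r a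

lemma updateFun_add (hm : (n : ℤ) ∣ m) : r.updateFun i v (i + m) = v + (m : WithTop ℤ) := by
  simp [updateFun, hm]

lemma updateFun_of_not_dvd (ha : ¬ (n : ℤ) ∣ a - i) : r.updateFun i v a = r a := if_neg ha

lemma Admissible.eq_top_or_eq {k : ℤ} (h : r.Admissible i v) (hm : (n : ℤ) ∣ m) (hk : (n : ℤ) ∣ k)
    (hmk : m ≤ k) (hle : ((i + k : ℤ) : WithTop ℤ) ≤ v + (m : WithTop ℤ)) : v = ⊤ ∨ m = k := by
  refine h.eq_top_or_lt.imp_right fun hv ↦ ?_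
  rw [show i + k = i + k - m + m by ring, coe_add_le_add_coe_iff] at hle
  have hlt : i + k - m < i + n := by exact_mod_cast hle.trans_lt hv
  have : k - m = 0 := Int.eq_zero_of_abs_lt_dvd (dvd_sub hk hm) (by rw [abs_lt]; omega)
  omega

lemma Admissible.updateFun_le_updateFun (h : r.Admissible i v) (hab : a ≤ b)
    (hb : b ≤ r.updateFun i v a) : r.updateFun i v b ≤ r.updateFun i v a := by
  by_cases hai : (n : ℤ) ∣ a - i <;> by_cases hbi : (n : ℤ) ∣ b - i
  · obtain ⟨m, hm, rfl⟩ := exists_eq_add_of_dvd_sub hai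
    obtain ⟨k, hk, rfl⟩ := exists_eq_add_of_dvd_sub hbi
    rw [updateFun_add hm] at hb ⊢
    rw [updateFun_add hk]
    obtain rfl | rfl := h.eq_top_or_eq hm hk (by omega) hb
    · simp
    · rfl
  · obtain ⟨m, hm, rfl⟩ := exists_eq_add_of_dvd_sub hai
    obtain ⟨c, rfl⟩ : ∃ c, b = c + m := ⟨b - m, by ring⟩
    have hne : c ≠ i := by
      rintro rfl
      exact hbi hai
    rw [updateFun_add hm] at hb ⊢
    rw [updateFun_of_not_dvd hbi, apply_add_of_dvd hm]
    gcongr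
    exact h.apply_le c (by omega) (coe_add_le_add_coe_iff.1 hb)
  · obtain ⟨m, hm, rfl⟩ := exists_eq_add_of_dvd_sub hbi
    obtain ⟨c, rfl⟩ : ∃ c, a = c + m := ⟨a - m, by ring⟩
    have hne : c ≠ i := by
      rintro rfl
      exact hai hbi
    rw [updateFun_of_not_dvd hai, apply_add_of_dvd hm] at hb ⊢
    rw [updateFun_add hm]
    gcongr
    exact h.le_of_lt c (by omega) (coe_add_le_add_coe_iff.1 hb)
  · rw [updateFun_of_not_dvd hai] at hb ⊢
    rw [updateFun_of_not_dvd hbi]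
    exact apply_le_apply hab hb

/-- The bracket vector obtained from `r` by replacing its value at `i` by `v`. -/
def update (r : BracketVector n) (h : r.Admissible i v) : BracketVector n where
  reach := r.updateFun i v
  le_reach a := by
    by_cases ha : (n : ℤ) ∣ a - i
    · obtain ⟨m, hm, rfl⟩ := exists_eq_add_of_dvd_sub ha
      rw [updateFun_add hm, coe_add_le_add_coe_iff]
      exact h.le
    · rw [updateFun_of_not_dvd ha]
      exact r.le_apply a
  reach_le_reach _ _ := h.updateFun_le_updateFun
  reach_add a := by
    by_cases ha : (n : ℤ) ∣ a - i
    · obtain ⟨m, hm, rfl⟩ := exists_eq_add_of_dvd_sub ha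
      rw [add_assoc, updateFun_add (dvd_add_self_right.2 hm), updateFun_add hm, WithTop.coe_add,
        add_assoc]
    · have hadd : ¬ (n : ℤ) ∣ a + n - i := by
        rwa [show a + n - i = a - i + n by ring, dvd_add_self_right]
      rw [updateFun_of_not_dvd ha, updateFun_of_not_dvd hadd, apply_add_of_dvd dvd_rfl]

lemma update_add (h : r.Admissible i v) (hm : (n : ℤ) ∣ m) :
    r.update h (i + m) = v + (m : WithTop ℤ) := updateFun_add hm

lemma update_self (h : r.Admissible i v) : r.update h i = v := by
  simpa using update_add h (dvd_zero (n : ℤ))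

lemma update_of_not_dvd (h : r.Admissible i v) (ha : ¬ (n : ℤ) ∣ a - i) : r.update h a = r a :=
  updateFun_of_not_dvd ha

lemma update_le (h : r.Admissible i v) (hrs : r ≤ s) (hv : v ≤ s i) : r.update h ≤ s := by
  refine le_def.2 fun a ↦ ?_
  by_cases ha : (n : ℤ) ∣ a - i
  · obtain ⟨m, hm, rfl⟩ := exists_eq_add_of_dvd_sub ha
    rw [update_add h hm, apply_add_of_dvd hm]
    gcongr
  · rw [update_of_not_dvd h ha]
    exact hrs a

lemma le_update (h : r.Admissible i v) (hsr : s ≤ r) (hv : s i ≤ v) : s ≤ r.update h := by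
  refine le_def.2 fun a ↦ ?_
  by_cases ha : (n : ℤ) ∣ a - i
  · obtain ⟨m, hm, rfl⟩ := exists_eq_add_of_dvd_sub ha
    rw [update_add h hm, apply_add_of_dvd hm]
    gcongr
  · rw [update_of_not_dvd h ha]
    exact hsr a

lemma lt_update (h : r.Admissible i v) (hv : r i < v) : r < r.update h :=
  lt_iff_le_and_exists_lt.2 ⟨le_update h le_rfl hv.le, i, by rwa [update_self]⟩

lemma update_lt (h : r.Admissible i v) (hv : v < r i) : r.update h < r :=
  lt_iff_le_and_exists_lt.2 ⟨update_le h le_rfl hv.le, i, by rwa [update_self]⟩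

lemma dvd_sub_of_update_le_update (hi : r.Admissible i v) (hj : r.Admissible j w) (hv : r i < v)
    (hle : r.update hi ≤ r.update hj) : (n : ℤ) ∣ i - j := by
  by_contra hij
  have := le_def.1 hle i
  rw [update_self, update_of_not_dvd hj hij] at this
  exact this.not_gt hv

lemma dvd_sub_of_update_le_update' (hi : r.Admissible i v) (hj : r.Admissible j w) (hw : w < r j)
    (hle : r.update hi ≤ r.update hj) : (n : ℤ) ∣ j - i := by
  by_contra hij
  have := le_def.1 hle j
  rw [update_self, update_of_not_dvd hi hij] at this
  exact this.not_gt hw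

/-! ### Upper covers -/

/-- `i` is the smallest integer at which `r` takes the value `r i`. -/
def IsFirst (r : BracketVector n) (i : ℤ) : Prop := ∀ p < i, r p ≠ r i

lemma IsFirst.add_of_dvd (hi : r.IsFirst i) (hm : (n : ℤ) ∣ m) : r.IsFirst (i + m) := by
  intro p hp
  rw [show p = p - m + m by ring, Ne, apply_add_eq_apply_add_iff hm]
  exact hi _ (by omega)

lemma IsFirst.apply_ne_top [NeZero n] (hi : r.IsFirst i) : r i ≠ ⊤ := by
  have hn : 0 < (n : ℤ) := by exact_mod_cast NeZero.pos n
  intro htop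
  apply hi (i + -n) (by omega)
  rw [apply_add_of_dvd (dvd_neg.2 dvd_rfl), htop, WithTop.top_add]

/-- The smallest value at least `w` that a bracket vector of period `n` can take at `i`: by
periodicity, a value that is at least `i + n` is infinite. -/
noncomputable def saturate (n : ℕ) (i : ℤ) (w : WithTop ℤ) : WithTop ℤ :=
  if w < (i + n : ℤ) then w else ⊤

lemma saturate_of_lt (hw : w < (i + n : ℤ)) : saturate n i w = w := if_pos hw

lemma saturate_of_le (hw : (i + n : ℤ) ≤ w) : saturate n i w = ⊤ := if_neg hw.not_gt

lemma le_saturate : w ≤ saturate n i w := by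
  obtain hw | hw := lt_or_ge w (i + n : ℤ)
  · rw [saturate_of_lt hw]
  · simp [saturate_of_le hw]

lemma saturate_le_apply [NeZero n] (hai : a ≤ i) (hw : w ≤ r a) : saturate n i w ≤ r a := by
  obtain hlt | hge := lt_or_ge w (i + n : ℤ)
  · rwa [saturate_of_lt hlt]
  · have hle : ((a + n : ℤ) : WithTop ℤ) ≤ (i + n : ℤ) := by
      exact_mod_cast Int.add_le_add_right hai n
    rw [apply_eq_top_of_add_le (hle.trans (hge.trans hw))]
    exact le_top

lemma apply_add_one_le (hai : a ≤ e) (h : (e : WithTop ℤ) < r a) : r (e + 1) ≤ r a :=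
  apply_le_apply (by omega) (coe_add_one_le_of_lt h)

lemma lt_saturate_apply_add_one : (e : WithTop ℤ) < saturate n i (r (e + 1)) := by
  have : (e : WithTop ℤ) < (e + 1 : ℤ) := by exact_mod_cast lt_add_one e
  exact this.trans_le ((r.le_apply _).trans le_saturate)

lemma IsFirst.admissible_saturate [NeZero n] (hi : r.IsFirst i) (he : r i = e) :
    r.Admissible i (saturate n i (r (e + 1))) where
  le := (r.le_apply i).trans (he ▸ lt_saturate_apply_add_one.le)
  eq_top_or_lt := by
    obtain hlt | hge := lt_or_ge (r (e + 1)) (i + n : ℤ)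
    · exact Or.inr (by rwa [saturate_of_lt hlt])
    · exact Or.inl (saturate_of_le hge)
  le_of_lt a hai hia := by
    have lt_apply : (e : WithTop ℤ) < r a :=
      he ▸ (apply_le_apply hai.le hia).lt_of_ne (hi a hai).symm
    exact saturate_le_apply hai.le
      (apply_add_one_le (hai.le.trans (le_of_apply_eq he)) lt_apply)
  apply_le b hib hb := by
    obtain hbe | heb := le_or_gt b e
    · have : r b ≤ r i := apply_le_apply hib.le (by rw [he]; exact_mod_cast hbe)
      exact this.trans (he ▸ lt_saturate_apply_add_one.le)
    · obtain hlt | hge := lt_or_ge (r (e + 1)) (i + n : ℤ)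
      · rw [saturate_of_lt hlt] at hb ⊢
        exact apply_le_apply heb hb
      · simp [saturate_of_le hge]

/-- The upper cover of `r` obtained by raising its finite value `e` at a first integer `i`. -/
noncomputable def raise [NeZero n] (hi : r.IsFirst i) (he : r i = e) : BracketVector n :=
  r.update (hi.admissible_saturate he)

lemma lt_raise [NeZero n] (hi : r.IsFirst i) (he : r i = e) : r < raise hi he :=
  lt_update _ (he ▸ lt_saturate_apply_add_one)

lemma raise_le [NeZero n] (hi : r.IsFirst i) (he : r i = e) (hrs : r ≤ s) (hlt : r i < s i) :
    raise hi he ≤ s :=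
  update_le _ hrs <| saturate_le_apply le_rfl <|
    (hrs _).trans (apply_add_one_le (le_of_apply_eq he) (he ▸ hlt))

lemma dvd_sub_of_raise_le_raise [NeZero n] {e' : ℤ} (hi : r.IsFirst i) (hj : r.IsFirst j)
    (he : r i = e) (he' : r j = e') (hle : raise hi he ≤ raise hj he') : (n : ℤ) ∣ i - j :=
  dvd_sub_of_update_le_update _ _ (he ▸ lt_saturate_apply_add_one) hle

lemma exists_isFirst_apply_eq [NeZero n] (ha : r a ≠ ⊤) : ∃ i ≤ a, r.IsFirst i ∧ r i = r a := by
  obtain ⟨e, he⟩ := WithTop.ne_top_iff_exists.1 ha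
  have fiber_bdd : ∀ i, i ≤ a ∧ r i = r a → e - n ≤ i := by
    rintro i ⟨-, hi⟩
    have := lt_add_of_apply_eq (hi.trans he.symm)
    omega
  obtain ⟨i, ⟨hia, hi⟩, hmin⟩ := Int.exists_least_of_bdd ⟨e - n, fiber_bdd⟩ ⟨a, le_rfl, rfl⟩
  exact ⟨i, hia, fun p hpi hp ↦ (hmin p ⟨hpi.le.trans hia, hp.trans hi⟩).not_gt hpi, hi⟩

lemma exists_isFirst_apply_lt [NeZero n] (h : r < s) : ∃ i, r.IsFirst i ∧ r i < s i := by
  obtain ⟨hrs, a, ha⟩ := lt_iff_le_and_exists_lt.1 h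
  obtain ⟨i, hia, hi, hri⟩ := exists_isFirst_apply_eq ha.ne_top
  have le_apply_i : (a : WithTop ℤ) ≤ s i := (r.le_apply a).trans (hri ▸ hrs i)
  exact ⟨i, hi, hri ▸ ha.trans_le (apply_le_apply hia le_apply_i)⟩

lemma ncard_setOf_covBy [NeZero n] (r : BracketVector n) :
    {s | r ⋖ s}.ncard = Nat.card {i : Set.Ico (0 : ℤ) n // r.IsFirst i} := by
  choose e he using fun i : {i : Set.Ico (0 : ℤ) n // r.IsFirst i} ↦
    WithTop.ne_top_iff_exists.1 i.2.apply_ne_top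
  refine ncard_setOf_covBy_eq_card (u := fun i ↦ raise i.2 (he i).symm)
    (fun i ↦ lt_raise _ _) (fun s hrs ↦ ?_) (fun i j hle ↦ ?_)
  · obtain ⟨i, hi, hlt⟩ := exists_isFirst_apply_lt hrs
    obtain ⟨j, hj, m, hm, rfl⟩ := exists_mem_Ico_eq_add (n := n) i
    exact ⟨⟨⟨i + m, hj⟩, hi.add_of_dvd hm⟩,
      raise_le _ _ hrs.le (apply_add_lt_apply_add hm hlt)⟩
  · exact Subtype.ext (Subtype.ext (eq_of_mem_Ico_of_dvd_sub i.1.2 j.1.2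
      (dvd_sub_of_raise_le_raise _ _ _ _ hle)))

/-! ### Lower covers -/

/-- `p` is the largest integer below `i` at which `r` takes the value `r i`. -/
def IsPrev (r : BracketVector n) (p i : ℤ) : Prop := IsGreatest {q | q < i ∧ r q = r i} p

namespace IsPrev

lemma lt (h : r.IsPrev p i) : p < i := h.1.1

lemma apply_eq (h : r.IsPrev p i) : r p = r i := h.1.2

lemma not_isFirst (h : r.IsPrev p i) : ¬ r.IsFirst i := fun hi ↦ hi p h.lt h.apply_eq

lemma apply_ne (h : r.IsPrev p i) (hpa : p < a) (hai : a < i) : r a ≠ r i :=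
  fun ha ↦ (h.2 ⟨hai, ha⟩).not_gt hpa

lemma add_of_dvd (h : r.IsPrev p i) (hm : (n : ℤ) ∣ m) : r.IsPrev (p + m) (i + m) := by
  refine ⟨⟨by have := h.lt; omega, (apply_add_eq_apply_add_iff hm).2 h.apply_eq⟩, ?_⟩
  rintro q ⟨hqi, hq⟩
  rw [show q = q - m + m by ring, apply_add_eq_apply_add_iff hm] at hq
  have := h.2 ⟨by omega, hq⟩
  omega

lemma left_unique {q : ℤ} (hp : r.IsPrev p i) (hq : r.IsPrev q i) : p = q :=
  IsGreatest.unique hp hq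

lemma right_unique (hi : r.IsPrev p i) (hj : r.IsPrev p j) : i = j := by
  have hij : r i = r j := hi.apply_eq.symm.trans hj.apply_eq
  by_contra hne
  obtain hlt | hlt := lt_or_gt_of_ne hne
  · exact hj.apply_ne hi.lt hlt hij
  · exact hi.apply_ne hj.lt hlt hij.symm

lemma le_add [NeZero n] (h : r.IsPrev p i) : i ≤ p + n := by
  have hn : 0 < (n : ℤ) := by exact_mod_cast NeZero.pos n
  by_cases htop : r i = ⊤
  · have : r (i + -n) = r i := by
      rw [apply_add_of_dvd (dvd_neg.2 dvd_rfl), htop, WithTop.top_add]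
    have := h.2 ⟨by omega, this⟩
    omega
  · obtain ⟨e, he⟩ := WithTop.ne_top_iff_exists.1 htop
    have := le_of_apply_eq he.symm
    have := lt_add_of_apply_eq (h.apply_eq.trans he.symm)
    omega

lemma coe_sub_one_lt (h : r.IsPrev p i) : ((i - 1 : ℤ) : WithTop ℤ) < r p := by
  have : ((i - 1 : ℤ) : WithTop ℤ) < i := by exact_mod_cast sub_one_lt i
  exact this.trans_le (h.apply_eq ▸ r.le_apply i)

end IsPrev

lemma exists_isPrev (hp : p < i) (h : r p = r i) : ∃ q, p ≤ q ∧ r.IsPrev q i := by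
  obtain ⟨q, hq, hmax⟩ := Int.exists_greatest_of_bdd (P := fun q ↦ q < i ∧ r q = r i)
    ⟨i, fun q hq ↦ hq.1.le⟩ ⟨p, hp, h⟩
  exact ⟨q, hmax p ⟨hp, h⟩, hq, hmax⟩

lemma IsPrev.admissible_sub_one [NeZero n] (h : r.IsPrev p i) : r.Admissible p (i - 1 : ℤ) where
  le := by exact_mod_cast Int.le_sub_one_of_lt h.lt
  eq_top_or_lt := Or.inr (by exact_mod_cast (sub_one_lt i).trans_le h.le_add)
  le_of_lt a hap hpa := h.coe_sub_one_lt.le.trans (apply_le_apply hap.le hpa)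
  apply_le b hpb hbi := by
    replace hbi : b < i := by
      have : b ≤ i - 1 := by exact_mod_cast hbi
      omega
    have b_le : (b : WithTop ℤ) ≤ r p := by
      rw [h.apply_eq]
      exact le_trans (by exact_mod_cast hbi.le) (r.le_apply i)
    refine le_coe_sub_one_of_lt (lt_of_not_ge fun i_le ↦ h.apply_ne hpb hbi ?_)
    exact le_antisymm (h.apply_eq ▸ apply_le_apply hpb.le b_le) (apply_le_apply hbi.le i_le)

/-- The lower cover of `r` attached to a non-first integer `i` with predecessor `p`. -/
def lower [NeZero n] (h : r.IsPrev p i) : BracketVector n := r.update h.admissible_sub_one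

lemma lower_lt [NeZero n] (h : r.IsPrev p i) : lower h < r := update_lt _ h.coe_sub_one_lt

lemma le_lower [NeZero n] (h : r.IsPrev p i) (hsr : s ≤ r) (hlt : s p < i) : s ≤ lower h :=
  le_update _ hsr (le_coe_sub_one_of_lt hlt)

lemma dvd_sub_of_lower_le_lower [NeZero n] {q : ℤ} (hi : r.IsPrev p i) (hj : r.IsPrev q j)
    (hle : lower hi ≤ lower hj) : (n : ℤ) ∣ i - j := by
  have hqp : (n : ℤ) ∣ q - p := dvd_sub_of_update_le_update' _ _ hj.coe_sub_one_lt hle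
  have hj' : r.IsPrev q (i + (q - p)) := by simpa using hi.add_of_dvd hqp
  rw [hj.right_unique hj', show i - (i + (q - p)) = -(q - p) by ring]
  exact dvd_neg.2 hqp

lemma exists_lt_apply_eq [NeZero n] (he : (e : WithTop ℤ) < r a) : ∃ i, e < i ∧ r i = r a := by
  have hn : 0 < (n : ℤ) := by exact_mod_cast NeZero.pos n
  by_cases htop : r a = ⊤
  · refine ⟨a + |e - a + 1| * n, ?_, by rw [apply_add_of_dvd (dvd_mul_left _ _), htop]; rfl⟩
    nlinarith [le_abs_self (e - a + 1), abs_nonneg (e - a + 1)]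
  · obtain ⟨c, hc⟩ := WithTop.ne_top_iff_exists.1 htop
    refine ⟨c, by exact_mod_cast hc ▸ he, le_antisymm ?_ (hc ▸ r.le_apply c)⟩
    exact apply_le_apply (le_of_apply_eq hc.symm) hc.le

lemma exists_isPrev_apply_lt [NeZero n] (h : s < r) : ∃ p i, r.IsPrev p i ∧ s p < i := by
  obtain ⟨-, a, ha⟩ := lt_iff_le_and_exists_lt.1 h
  obtain ⟨e, he⟩ := WithTop.ne_top_iff_exists.1 ha.ne_top
  have hae : a ≤ e := le_of_apply_eq he.symm
  obtain ⟨i, ⟨hei, hi⟩, hmin⟩ := Int.exists_least_of_bdd (P := fun i ↦ e < i ∧ r i = r a)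
    ⟨e, fun i hi ↦ hi.1.le⟩ (exists_lt_apply_eq (he ▸ ha))
  obtain ⟨p, hap, hp⟩ := exists_isPrev (hae.trans_lt hei) hi.symm
  have hpe : p ≤ e := by
    by_contra! hep
    exact (hmin p ⟨hep, hp.apply_eq.trans hi⟩).not_gt hp.lt
  have s_p_le : s p ≤ e := he ▸ apply_le_apply hap (he ▸ by exact_mod_cast hpe)
  exact ⟨p, i, hp, s_p_le.trans_lt (by exact_mod_cast hei)⟩

lemma ncard_setOf_covBy' [NeZero n] (r : BracketVector n) :
    {s | s ⋖ r}.ncard = Nat.card {i : Set.Ico (0 : ℤ) n // ¬ r.IsFirst i} := by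
  have exists_prev (i : {i : Set.Ico (0 : ℤ) n // ¬ r.IsFirst i}) : ∃ p, r.IsPrev p i := by
    obtain ⟨i, hi⟩ := i
    simp only [IsFirst, not_forall, not_not] at hi
    obtain ⟨p, hp, h⟩ := hi
    exact (exists_isPrev hp h).imp fun _ ↦ And.right
  choose prev isPrev_prev using exists_prev
  refine ncard_setOf_covBy_eq_card' (u := fun i ↦ lower (isPrev_prev i))
    (fun i ↦ lower_lt _) (fun s hsr ↦ ?_) (fun i j hle ↦ ?_)
  · obtain ⟨p, i, hp, hlt⟩ := exists_isPrev_apply_lt hsr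
    obtain ⟨j, hj, m, hm, rfl⟩ := exists_mem_Ico_eq_add (n := n) i
    have hpm := hp.add_of_dvd hm
    refine ⟨⟨⟨i + m, hj⟩, hpm.not_isFirst⟩, le_lower _ hsr.le ?_⟩
    rw [(isPrev_prev _).left_unique hpm, apply_add_of_dvd hm, WithTop.coe_add]
    exact WithTop.add_lt_add_right WithTop.coe_ne_top hlt
  · exact Subtype.ext (Subtype.ext (eq_of_mem_Ico_of_dvd_sub i.1.2 j.1.2
      (dvd_sub_of_lower_le_lower _ _ hle)))

theorem ncard_covBy_add_ncard_covBy [NeZero n] (r : BracketVector n) :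
    {s | s ⋖ r}.ncard + {s | r ⋖ s}.ncard = n := by
  classical
  rw [ncard_setOf_covBy, ncard_setOf_covBy', add_comm, ← Nat.card_sum,
    Nat.card_congr (Equiv.sumCompl fun i : Set.Ico (0 : ℤ) n ↦ r.IsFirst i)]
  simp

/-! ### Bracket vectors and 312-avoiding TITOs -/

/-- The 312-avoiding TITO with bracket vector `r`: for `d ≤ c`, the integer `c` comes weakly before
`d` exactly when `c ≤ r d`. -/
def toTITO (r : BracketVector n) : TITO n where
  rel c d := (d ≤ c ∧ c ≤ r d) ∨ (c < d ∧ r c < d)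
  refl a := Or.inl ⟨le_rfl, r.le_apply a⟩
  antisymm := by
    rintro a b (⟨hba, ha⟩ | ⟨hab, ha⟩) (⟨hab', hb⟩ | ⟨hba', hb⟩)
    · exact hab'.antisymm hba
    · exact absurd hb ha.not_gt
    · exact absurd ha hb.not_gt
    · exact absurd hab hba'.not_gt
  trans := by
    rintro a b c (⟨hba, ha⟩ | ⟨hab, ha⟩) (⟨hcb, hb⟩ | ⟨hbc, hb⟩)
    · exact Or.inl ⟨hcb.trans hba, ha.trans (apply_le_apply hcb hb)⟩
    · have hac : a < c := by exact_mod_cast ha.trans_lt hb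
      exact Or.inr ⟨hac, (apply_le_apply hba ha).trans_lt hb⟩
    · obtain hca | hac := le_or_gt c a
      · exact Or.inl ⟨hca, le_trans (by exact_mod_cast hab.le) hb⟩
      · refine Or.inr ⟨hac, lt_of_not_ge fun hc ↦ ?_⟩
        exact (hb.trans (apply_le_apply hac.le hc)).not_gt ha
    · exact Or.inr ⟨hab.trans hbc, ha.trans (by exact_mod_cast hbc)⟩
  total a b := by
    obtain hab | hba := lt_or_ge a b
    · exact (lt_or_ge (r a) b).imp (fun h ↦ Or.inr ⟨hab, h⟩) fun h ↦ Or.inl ⟨hab.le, h⟩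
    · obtain rfl | hba := hba.eq_or_lt
      · exact Or.inl (Or.inl ⟨le_rfl, r.le_apply _⟩)
      · exact (le_or_gt (a : WithTop ℤ) (r b)).imp (fun h ↦ Or.inl ⟨hba.le, h⟩)
          fun h ↦ Or.inr ⟨hba, h⟩
  invariant a b := by
    have coe_le_iff (c d : ℤ) : ((c + n : ℤ) : WithTop ℤ) ≤ r (d + n) ↔ (c : WithTop ℤ) ≤ r d := by
      rw [apply_add_of_dvd dvd_rfl, coe_add_le_add_coe_iff]
    simp only [← not_le, coe_le_iff, Int.add_le_add_iff_right]

lemma mem_inversions_toTITO :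
    (a, b) ∈ r.toTITO.Inversions ↔ a < b ∧ (b : WithTop ℤ) ≤ r a := by
  refine and_congr_right fun hab ↦ ⟨?_, fun hb ↦ Or.inl ⟨le_of_lt hab, hb⟩⟩
  rintro (⟨-, hb⟩ | ⟨hba, -⟩)
  · exact hb
  · exact absurd hab (lt_asymm hba)

lemma avoids312_toTITO (r : BracketVector n) : r.toTITO.Avoids312 := by
  rintro ⟨a, b, c, hab, hbc, hca, hab' | ⟨-, hb⟩⟩
  · exact absurd hab hab'.1.not_gt
  · have : (c : WithTop ℤ) ≤ r a := (mem_inversions_toTITO.1 ⟨hab.trans hbc, hca⟩).2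
    exact (this.trans_lt hb).not_gt (by exact_mod_cast hbc)

lemma inversions_toTITO_subset : r.toTITO.Inversions ⊆ s.toTITO.Inversions ↔ r ≤ s := by
  constructor
  · intro h a
    refine WithTop.forall_coe_le_iff_le.1 fun b hb ↦ ?_
    obtain hba | hab := le_or_gt b a
    · exact le_trans (by exact_mod_cast hba) (s.le_apply a)
    · exact (mem_inversions_toTITO.1 (h (mem_inversions_toTITO.2 ⟨hab, hb⟩))).2
  · rintro h ⟨a, b⟩ hab
    rw [mem_inversions_toTITO] at hab ⊢
    exact ⟨hab.1, hab.2.trans (h a)⟩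

lemma inversions_toTITO_ssubset : r.toTITO.Inversions ⊂ s.toTITO.Inversions ↔ r < s := by
  rw [ssubset_iff_subset_not_subset, lt_iff_le_not_ge, inversions_toTITO_subset,
    inversions_toTITO_subset]

lemma toTITO_injective : Function.Injective (toTITO : BracketVector n → TITO n) :=
  fun _ _ h ↦ le_antisymm (inversions_toTITO_subset.1 (h ▸ subset_rfl))
    (inversions_toTITO_subset.1 (h ▸ subset_rfl))

end BracketVector

namespace TITO

open BracketVector

variable {n : ℕ}

lemma rel_iff_notMem_inversions (t : TITO n) {a b : ℤ} (hab : a < b) :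
    t.rel a b ↔ (a, b) ∉ t.Inversions := by
  refine ⟨fun h hinv ↦ hab.ne (t.antisymm a b h hinv.2), fun h ↦ ?_⟩
  exact (t.total a b).resolve_right fun hba ↦ h ⟨hab, hba⟩

lemma inversions_injective : Function.Injective (Inversions : TITO n → Set (ℤ × ℤ)) := by
  intro s t hst
  have rel_eq : s.rel = t.rel := by
    ext a b
    obtain hab | rfl | hba := lt_trichotomy a b
    · rw [rel_iff_notMem_inversions s hab, rel_iff_notMem_inversions t hab, hst]
    · exact iff_of_true (s.refl a) (t.refl a)
    · have : (b, a) ∈ s.Inversions ↔ (b, a) ∈ t.Inversions := by rw [hst]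
      exact (and_congr_right_iff.1 this) hba
  cases s
  cases t
  congr

lemma Avoids312.isLowerSet {t : TITO n} (ht : t.Avoids312) (a : ℤ) :
    IsLowerSet {b | a ≤ b → t.rel b a} := by
  intro c b hbc hc hab
  obtain rfl | hab := hab.eq_or_lt
  · exact t.refl a
  obtain rfl | hbc := hbc.eq_or_lt
  · exact hc hab.le
  exact (t.total b a).resolve_right fun h ↦ ht ⟨a, b, c, hab, hbc, hc (hab.trans hbc).le, h⟩

lemma Avoids312.exists_bracketVector {t : TITO n} (ht : t.Avoids312) :
    ∃ r : BracketVector n, ∀ a b : ℤ, (b : WithTop ℤ) ≤ r a ↔ (a ≤ b → t.rel b a) := by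
  choose reach mem_iff using fun a ↦
    exists_forall_mem_iff_coe_le (ht.isLowerSet a) ⟨a, fun _ ↦ t.refl a⟩
  refine ⟨⟨reach, fun a ↦ (mem_iff a a).1 fun _ ↦ t.refl a, fun a b hab hb ↦ ?_, fun a ↦ ?_⟩,
    fun a b ↦ (mem_iff a b).symm⟩
  · refine WithTop.forall_coe_le_iff_le.1 fun c hc ↦ (mem_iff a c).1 fun hac ↦ ?_
    have hba : t.rel b a := (mem_iff a b).2 hb hab
    obtain hbc | hcb := le_or_gt b c
    · exact t.trans c b a ((mem_iff b c).2 hc hbc) hba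
    · exact ht.isLowerSet a hcb.le (fun _ ↦ hba) hac
  · refine WithTop.eq_of_forall_coe_le_iff fun c ↦ ?_
    obtain ⟨b, rfl⟩ : ∃ b, c = b + n := ⟨c - n, by ring⟩
    rw [coe_add_le_add_coe_iff, ← mem_iff, ← mem_iff]
    exact imp_congr (by omega) (t.invariant b a).symm

lemma Avoids312.exists_toTITO_eq {t : TITO n} (ht : t.Avoids312) :
    ∃ r : BracketVector n, r.toTITO = t := by
  obtain ⟨r, le_iff⟩ := ht.exists_bracketVector
  refine ⟨r, inversions_injective (Set.ext fun ⟨a, b⟩ ↦ ?_)⟩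
  rw [mem_inversions_toTITO, le_iff]
  exact and_congr_right fun hab ↦ ⟨fun h ↦ h hab.le, fun h _ ↦ h⟩

lemma range_toTITO : Set.range (toTITO : BracketVector n → TITO n) = {t | t.Avoids312} :=
  Set.ext fun _ ↦ ⟨fun ⟨r, hr⟩ ↦ hr ▸ r.avoids312_toTITO, Avoids312.exists_toTITO_eq⟩

lemma coversIn_toTITO_iff {r s : BracketVector n} :
    CoversIn {t : TITO n | t.Avoids312} r.toTITO s.toTITO ↔ r ⋖ s := by
  simp [← range_toTITO, CoversIn, inversions_toTITO_ssubset, CovBy]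

lemma setOf_coversIn_left (r : BracketVector n) :
    {y : TITO n | CoversIn {t : TITO n | t.Avoids312} r.toTITO y} = toTITO '' {s | r ⋖ s} := by
  ext y
  constructor
  · intro hy
    obtain ⟨s, rfl⟩ := Avoids312.exists_toTITO_eq hy.2.1
    exact ⟨s, coversIn_toTITO_iff.1 hy, rfl⟩
  · rintro ⟨s, hs, rfl⟩
    exact coversIn_toTITO_iff.2 hs

lemma setOf_coversIn_right (r : BracketVector n) :
    {y : TITO n | CoversIn {t : TITO n | t.Avoids312} y r.toTITO} = toTITO '' {s | s ⋖ r} := by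
  ext y
  constructor
  · intro hy
    obtain ⟨s, rfl⟩ := Avoids312.exists_toTITO_eq hy.1
    exact ⟨s, coversIn_toTITO_iff.1 hy, rfl⟩
  · rintro ⟨s, hs, rfl⟩
    exact coversIn_toTITO_iff.2 hs

end TITO

theorem stmt10 (n : ℕ) (hn : 2 ≤ n) (x : TITO n) (hx : x.Avoids312) :
    {y : TITO n | CoversIn {t : TITO n | t.Avoids312} y x}.ncard +
      {y : TITO n | CoversIn {t : TITO n | t.Avoids312} x y}.ncard = n := by
  have : NeZero n := ⟨by omega⟩
  obtain ⟨r, rfl⟩ := hx.exists_toTITO_eq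
  rw [TITO.setOf_coversIn_left, TITO.setOf_coversIn_right,
    Set.ncard_image_of_injective _ BracketVector.toTITO_injective,
    Set.ncard_image_of_injective _ BracketVector.toTITO_injective]
  exact r.ncard_covBy_add_ncard_covBy
end

section
/- The number of 312-avoiding TITOs equals the type B_n Catalan number: the cardinality of the set of 312-avoiding TITOs is the binomial coefficient C(2n, n). -/
/-!
Call the least `b > a` with `a ≼ b` the first ascent of `a`, if there is one. It is at most
`a + n`, and the number `c m` of integers with first ascent `m` is `n`-periodic in `m`, with sum at
most `n` over a period because every residue class contributes at most once. For a 312-avoiding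
order and `a ≤ b`, comparing the set of integers with first ascent in `(a, m]` to the interval
`[a, m)` shows that `b ≼ a` exactly when the lattice path with steps `1 - c j` stays strictly above
its height at `a` throughout `(a, b]`. Hence `c` determines the order. Conversely, reading this
criterion as a definition turns every `n`-periodic `c` into a 312-avoiding order, and if the sum
of `c` over a period is at most `n`, so that the path does not drift downwards, its first ascent
counts are `c` again. Thus 312-avoiding orders correspond to functions `ℤ/n → ℕ` of sum at most
`n`, which stars and bars counts.
-/

lemma sum_Ioc_add_sum_Ioc {α M : Type*} [LinearOrder α] [LocallyFiniteOrder α] [AddCommMonoid M]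
    (f : α → M) {a b c : α} (hab : a ≤ b) (hbc : b ≤ c) :
    ∑ i ∈ Finset.Ioc a b, f i + ∑ i ∈ Finset.Ioc b c, f i = ∑ i ∈ Finset.Ioc a c, f i := by
  rw [← Finset.sum_union (Finset.Ioc_disjoint_Ioc_of_le le_rfl),
    Finset.Ioc_union_Ioc_eq_Ioc hab hbc]

lemma sum_Ioc_zmodCast {n : ℕ} [NeZero n] {M : Type*} [AddCommMonoid M] (f : ZMod n → M) (a : ℤ) :
    ∑ j ∈ Finset.Ioc a (a + n), f j = ∑ i, f i := by
  have hinj : Set.InjOn (fun j : ℤ ↦ (j : ZMod n)) (Finset.Ioc a (a + n)) := by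
    intro i hi j hj hij
    rw [Finset.coe_Ioc, Set.mem_Ioc] at hi hj
    have hdvd : (n : ℤ) ∣ j - i := (ZMod.intCast_eq_intCast_iff_dvd_sub i j n).1 hij
    have := Int.eq_zero_of_abs_lt_dvd hdvd (by rw [abs_lt]; omega)
    omega
  have hcard : (Finset.univ : Finset (ZMod n)).card ≤ (Finset.Ioc a (a + n)).card := by simp
  exact Finset.sum_nbij (fun j : ℤ ↦ (j : ZMod n)) (by simp) hinj
    (Finset.surjOn_of_injOn_of_card_le _ (by simp [Set.MapsTo]) hinj hcard) (by simp)

/-- Functions of sum at most `k` on `ι` correspond to functions of sum exactly `k` on `Option ι`,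
the value at `none` being the slack. -/
def sumLeEquivSumEq (ι : Type*) [Fintype ι] (k : ℕ) :
    {d : ι → ℕ // ∑ i, d i ≤ k} ≃ {e : Option ι → ℕ // ∑ i, e i = k} where
  toFun d := ⟨fun i ↦ i.elim (k - ∑ j, d.1 j) d.1, by
    simpa [Fintype.sum_option] using Nat.sub_add_cancel d.2⟩
  invFun e := ⟨fun i ↦ e.1 (some i), by
    have he := e.2
    rw [Fintype.sum_option] at he
    exact (Nat.le_add_left _ _).trans he.le⟩
  left_inv _ := rfl
  right_inv e := by
    have he := e.2
    rw [Fintype.sum_option] at he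
    ext (_ | i)
    · simp only [Option.elim]
      omega
    · rfl

lemma card_sum_le_eq_choose (ι : Type*) [Fintype ι] (k : ℕ) :
    Nat.card {d : ι → ℕ // ∑ i, d i ≤ k} = (Fintype.card ι + k).choose k := by
  classical
  rw [Nat.card_congr ((sumLeEquivSumEq ι k).trans (Sym.equivNatSumOfFintype (Option ι) k).symm),
    Nat.card_eq_fintype_card, Sym.card_sym_eq_choose, Fintype.card_option, Nat.add_right_comm,
    Nat.add_sub_cancel]

/-- The height gained between `a` and `b` by the lattice path whose `j`-th step is `1 - c j`
(a Łukasiewicz path read backwards: it climbs by at most one at a time). -/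
noncomputable def pathRise (c : ℤ → ℕ) (a b : ℤ) : ℤ := ∑ j ∈ Finset.Ioc a b, (1 - (c j : ℤ))

/-- The path with steps `1 - c j` is strictly above its height at `a` throughout `(a, b]`.
This will be the condition for `b` to precede `a`. -/
def StaysAbove (c : ℤ → ℕ) (a b : ℤ) : Prop := ∀ m, a < m → m ≤ b → 0 < pathRise c a m

section Path

variable {c : ℤ → ℕ} {a b : ℤ}

@[simp]
lemma pathRise_self (c : ℤ → ℕ) (a : ℤ) : pathRise c a a = 0 := by simp [pathRise]

lemma pathRise_add_pathRise (c : ℤ → ℕ) {a b m : ℤ} (hab : a ≤ b) (hbm : b ≤ m) :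
    pathRise c a b + pathRise c b m = pathRise c a m :=
  sum_Ioc_add_sum_Ioc _ hab hbm

lemma pathRise_sub_one_self (c : ℤ → ℕ) (a : ℤ) : pathRise c (a - 1) a = 1 - c a := by
  rw [pathRise, show Finset.Ioc (a - 1) a = {a} by ext; simp; omega, Finset.sum_singleton]

lemma pathRise_eq_sub_sum (c : ℤ → ℕ) (hab : a ≤ b) :
    pathRise c a b = b - a - (∑ j ∈ Finset.Ioc a b, c j : ℕ) := by
  simp [pathRise, Finset.sum_sub_distrib, hab]

lemma pathRise_add_period {p : ℤ} (hc : Function.Periodic c p) (a b : ℤ) :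
    pathRise c (a + p) (b + p) = pathRise c a b := by
  simp [pathRise, ← Finset.map_add_right_Ioc, Finset.sum_map, hc _]

lemma StaysAbove.self (c : ℤ → ℕ) (a : ℤ) : StaysAbove c a a := fun _ h₁ h₂ ↦ by omega

lemma StaysAbove.mono {b' : ℤ} (h : StaysAbove c a b) (hb : b' ≤ b) : StaysAbove c a b' :=
  fun m ham hmb ↦ h m ham (hmb.trans hb)

lemma StaysAbove.trans {d : ℤ} (hab : a ≤ b) (h : StaysAbove c a b) (h' : StaysAbove c b d) :
    StaysAbove c a d := by
  intro m ham hmd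
  rcases le_or_gt m b with hmb | hbm
  · exact h m ham hmb
  · rcases hab.eq_or_lt with rfl | hab
    · exact h' m ham hmd
    · rw [← pathRise_add_pathRise c hab.le hbm.le]
      exact add_pos (h b hab le_rfl) (h' m hbm hmd)

lemma staysAbove_add_period {p : ℤ} (hc : Function.Periodic c p) (a b : ℤ) :
    StaysAbove c (a + p) (b + p) ↔ StaysAbove c a b := by
  constructor
  · intro h m ham hmb
    simpa [pathRise_add_period hc] using h (m + p) (by omega) (by omega)
  · intro h m ham hmb
    simpa [← pathRise_add_period hc a] using h (m - p) (by omega) (by omega)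

lemma StaysAbove.pathRise_nonneg (h : StaysAbove c a b) (hab : a ≤ b) : 0 ≤ pathRise c a b := by
  rcases hab.eq_or_lt with rfl | hab
  · exact (pathRise_self c a).ge
  · exact (h b hab le_rfl).le

lemma StaysAbove.pathRise_lt {x y : ℤ} (h : StaysAbove c x b) (hxy : x < y) (hyb : y ≤ b) :
    pathRise c y b < pathRise c x b := by
  have := h y hxy hyb
  rw [← pathRise_add_pathRise c hxy.le hyb]
  omega

/-- Upward steps have size one, so going left from `b` the path cannot jump over the
height `v` below its endpoint: take the last visit to that height or lower. -/
lemma exists_staysAbove_pathRise_eq (hab : a ≤ b) {v : ℤ} (hv : 0 ≤ v)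
    (hva : v ≤ pathRise c a b) : ∃ x ≤ b, StaysAbove c x b ∧ pathRise c x b = v := by
  obtain ⟨x, ⟨hxb, hvx⟩, hmax⟩ := Int.exists_greatest_of_bdd
    (P := fun x ↦ x ≤ b ∧ v ≤ pathRise c x b) ⟨b, fun _ h ↦ h.1⟩ ⟨a, hab, hva⟩
  have hlt : ∀ y, x < y → y ≤ b → pathRise c y b < v := fun y hxy hyb ↦
    lt_of_not_ge fun hvy ↦ (hmax y ⟨hyb, hvy⟩).not_gt hxy
  have hxv : pathRise c x b = v := by
    rcases hxb.eq_or_lt with rfl | hxb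
    · have := pathRise_self c x
      omega
    · have hnext := hlt (x + 1) (by omega) hxb
      have hsplit := pathRise_add_pathRise c (show x ≤ x + 1 by omega) hxb
      have hstep := pathRise_sub_one_self c (x + 1)
      rw [add_sub_cancel_right] at hstep
      omega
  refine ⟨x, hxb, fun m hxm hmb ↦ ?_, hxv⟩
  have := pathRise_add_pathRise c hxm.le hmb
  have := hlt m hxm hmb
  omega

end Path

namespace TITO

variable {n : ℕ} {t : TITO n} {a b m : ℤ}

lemma not_rel_iff (t : TITO n) (hab : a ≠ b) : ¬ t.rel a b ↔ t.rel b a :=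
  ⟨(t.total a b).resolve_left, fun hba h ↦ hab (t.antisymm a b h hba)⟩

lemma ext_of_lt {s t : TITO n} (h : ∀ a b, a < b → (s.rel b a ↔ t.rel b a)) : s = t := by
  have hrel : s.rel = t.rel := by
    ext x y
    rcases lt_trichotomy x y with hxy | rfl | hyx
    · rw [← s.not_rel_iff hxy.ne', ← t.not_rel_iff hxy.ne', h x y hxy]
    · exact iff_of_true (s.refl x) (t.refl x)
    · exact h y x hyx
  cases s
  cases t
  congr

lemma rel_add_int_mul (t : TITO n) (k a b : ℤ) :
    t.rel (a + k * n) (b + k * n) ↔ t.rel a b := by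
  have hper : Function.Periodic (fun x ↦ t.rel (a + x) (b + x)) (n : ℤ) := fun x ↦ by
    simp only [← add_assoc, ← t.invariant]
  simpa using hper.int_mul k 0

lemma Avoids312.rel_of_le_of_le (ht : t.Avoids312) (hab : a ≤ b) (hbm : b ≤ m)
    (h : t.rel m a) : t.rel b a := by
  rcases hab.eq_or_lt with rfl | hab
  · exact t.refl a
  rcases hbm.eq_or_lt with rfl | hbm
  · exact h
  rw [← t.not_rel_iff hab.ne]
  exact fun h' ↦ ht ⟨a, b, m, hab, hbm, h, h'⟩

/-- `m` is the first ascent of `a`: the least integer larger than `a` that follows `a` in the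
order. An integer `a` has a first ascent unless every larger integer precedes it. -/
def IsFirstAscent (t : TITO n) (a m : ℤ) : Prop := IsLeast {b | a < b ∧ t.rel a b} m

/-- The number of integers whose first ascent is `m`. -/
noncomputable def ascentCount (t : TITO n) (m : ℤ) : ℕ := {a | t.IsFirstAscent a m}.ncard

lemma isFirstAscent_iff : t.IsFirstAscent a m ↔
    a < m ∧ t.rel a m ∧ ∀ b, a < b → b < m → t.rel b a := by
  constructor
  · rintro ⟨⟨ham, hrel⟩, hmin⟩
    refine ⟨ham, hrel, fun b hab hbm ↦ ?_⟩
    rw [← t.not_rel_iff hab.ne]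
    exact fun h ↦ (hmin ⟨hab, h⟩).not_gt hbm
  · rintro ⟨ham, hrel, hmin⟩
    refine ⟨⟨ham, hrel⟩, fun b ⟨hab, h⟩ ↦ le_of_not_gt fun hbm ↦ ?_⟩
    exact (t.not_rel_iff hab.ne).2 (hmin b hab hbm) h

lemma exists_isFirstAscent_le (hab : a < b) (h : t.rel a b) : ∃ m ≤ b, t.IsFirstAscent a m := by
  obtain ⟨m, hm, hmin⟩ := Int.exists_least_of_bdd (P := fun b ↦ a < b ∧ t.rel a b)
    ⟨a, fun _ h ↦ h.1.le⟩ ⟨b, hab, h⟩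
  exact ⟨m, hmin b ⟨hab, h⟩, hm, fun x hx ↦ hmin x hx⟩

lemma isFirstAscent_add_int_mul (t : TITO n) (k a m : ℤ) :
    t.IsFirstAscent (a + k * n) (m + k * n) ↔ t.IsFirstAscent a m := by
  simp only [isFirstAscent_iff, rel_add_int_mul, add_lt_add_iff_right]
  refine and_congr_right fun _ ↦ and_congr_right fun _ ↦ ?_
  rw [← (Equiv.addRight (k * (n : ℤ))).forall_congr_right]
  simp [rel_add_int_mul]

lemma IsFirstAscent.le_add [NeZero n] (h : t.IsFirstAscent a m) : m ≤ a + n := by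
  have hn := NeZero.pos n
  rw [isFirstAscent_iff] at h
  obtain ⟨ham, hrel, hmin⟩ := h
  by_contra! hlt
  have hshift : t.rel m (a + n) := by
    simpa [t.invariant (m - n) a] using hmin (m - n) (by omega) (by omega)
  have hwane : t.rel (a + n) a := hmin (a + n) (by omega) hlt
  exact (t.not_rel_iff ham.ne).2 (t.trans _ _ _ hshift hwane) hrel

lemma finite_setOf_isFirstAscent [NeZero n] (t : TITO n) (m : ℤ) :
    {a | t.IsFirstAscent a m}.Finite := by
  refine (Set.finite_Icc (m - n) m).subset fun a h ↦ ⟨?_, h.1.1.le⟩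
  have := h.le_add
  omega

lemma sum_ascentCount [NeZero n] (t : TITO n) (s : Finset ℤ) :
    ∑ j ∈ s, t.ascentCount j = (⋃ j ∈ s, {a | t.IsFirstAscent a j}).ncard := by
  have hdisj : (s : Set ℤ).PairwiseDisjoint fun j ↦ {a | t.IsFirstAscent a j} :=
    fun i _ j _ hij ↦ Set.disjoint_left.2 fun a hi hj ↦ hij (IsLeast.unique hi hj)
  have hunion := s.finite_toSet.ncard_biUnion (fun j _ ↦ t.finite_setOf_isFirstAscent j) hdisj
  rw [finsum_mem_coe_finset] at hunion
  exact hunion.symm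

lemma periodic_ascentCount (t : TITO n) : Function.Periodic t.ascentCount (n : ℤ) := by
  intro m
  have himage : {a | t.IsFirstAscent a (m + n)} = (· + (n : ℤ)) '' {a | t.IsFirstAscent a m} := by
    ext a
    simpa [Set.image_add_right, ← sub_eq_add_neg] using t.isFirstAscent_add_int_mul 1 (a - n) m
  rw [ascentCount, himage, Set.ncard_image_of_injective _ (add_left_injective _), ascentCount]

/-- Translating an integer by a multiple of `n` translates its first ascent along with it, so
each residue class contributes at most once to a period. -/
lemma sum_ascentCount_period_le [NeZero n] (t : TITO n) (a : ℤ) :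
    ∑ j ∈ Finset.Ioc a (a + n), t.ascentCount j ≤ n := by
  have hinj : Set.InjOn (fun x : ℤ ↦ (x : ZMod n))
      (⋃ j ∈ Finset.Ioc a (a + n), {x | t.IsFirstAscent x j}) := by
    intro x hx y hy hxy
    obtain ⟨i, hi, hxi⟩ := Set.mem_iUnion₂.1 hx
    obtain ⟨j, hj, hyj⟩ := Set.mem_iUnion₂.1 hy
    rw [Finset.mem_Ioc] at hi hj
    obtain ⟨k, hk⟩ := (ZMod.intCast_eq_intCast_iff_dvd_sub x y n).1 hxy
    obtain rfl : y = x + k * n := by linarith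
    have hij : i + k * n = j := ((t.isFirstAscent_add_int_mul k x i).2 hxi).unique hyj
    have hzero : j - i = 0 :=
      Int.eq_zero_of_abs_lt_dvd ⟨k, by linarith⟩ (show |j - i| < n by rw [abs_lt]; omega)
    linarith
  calc ∑ j ∈ Finset.Ioc a (a + n), t.ascentCount j
      = (⋃ j ∈ Finset.Ioc a (a + n), {x | t.IsFirstAscent x j}).ncard := t.sum_ascentCount _
    _ ≤ (Set.univ : Set (ZMod n)).ncard :=
        Set.ncard_le_ncard_of_injOn _ (fun _ _ ↦ Set.mem_univ _) hinj
    _ = n := by rw [Set.ncard_univ, Nat.card_zmod]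

lemma sum_ascentCount_lt [NeZero n] (ht : t.Avoids312) (ham : a < m) (h : t.rel m a) :
    (∑ j ∈ Finset.Ioc a m, t.ascentCount j : ℕ) < m - a := by
  have hsub : (⋃ j ∈ Finset.Ioc a m, {x | t.IsFirstAscent x j}) ⊆ Finset.Ioo a m := by
    intro x hx
    obtain ⟨j, hj, hxj⟩ := Set.mem_iUnion₂.1 hx
    rw [Finset.mem_Ioc] at hj
    obtain ⟨hlt, hrel, hmin⟩ := isFirstAscent_iff.1 hxj
    rw [Finset.coe_Ioo]
    refine ⟨lt_of_not_ge fun hxa ↦ (t.not_rel_iff hlt.ne).2 ?_ hrel, hlt.trans_le hj.2⟩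
    have hja : t.rel j a := ht.rel_of_le_of_le hj.1.le hj.2 h
    rcases hxa.eq_or_lt with rfl | hxa
    · exact hja
    · exact t.trans _ _ _ hja (hmin a hxa hj.1)
  have hcard := Set.ncard_le_ncard hsub
  rw [Set.ncard_coe_finset, Int.card_Ioo, ← sum_ascentCount] at hcard
  omega

lemma IsFirstAscent.le_sum_ascentCount [NeZero n] (h : t.IsFirstAscent a m) :
    m - a ≤ (∑ j ∈ Finset.Ioc a m, t.ascentCount j : ℕ) := by
  obtain ⟨ham, hrel, hmin⟩ := isFirstAscent_iff.1 h
  have hsub : (Finset.Ico a m : Set ℤ) ⊆ ⋃ j ∈ Finset.Ioc a m, {x | t.IsFirstAscent x j} := by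
    intro x hx
    rw [Finset.coe_Ico, Set.mem_Ico] at hx
    have hxm : t.rel x m := by
      rcases hx.1.eq_or_lt with rfl | hax
      · exact hrel
      · exact t.trans _ _ _ (hmin x hax hx.2) hrel
    obtain ⟨j, hjm, hj⟩ := exists_isFirstAscent_le hx.2 hxm
    exact Set.mem_iUnion₂.2 ⟨j, Finset.mem_Ioc.2 ⟨hx.1.trans_lt hj.1.1, hjm⟩, hj⟩
  have hcard := Set.ncard_le_ncard hsub
    ((Finset.Ioc a m).finite_toSet.biUnion fun j _ ↦ t.finite_setOf_isFirstAscent j)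
  rw [Set.ncard_coe_finset, Int.card_Ico, ← sum_ascentCount] at hcard
  omega

theorem Avoids312.rel_iff_staysAbove [NeZero n] (ht : t.Avoids312) (hab : a ≤ b) :
    t.rel b a ↔ StaysAbove t.ascentCount a b := by
  constructor
  · intro h m ham hmb
    have := sum_ascentCount_lt ht ham (ht.rel_of_le_of_le ham.le hmb h)
    rw [pathRise_eq_sub_sum _ ham.le]
    omega
  · intro h
    by_contra hba
    have hlt : a < b := hab.lt_of_ne fun h' ↦ hba (h' ▸ t.refl a)
    obtain ⟨m, hmb, hm⟩ := exists_isFirstAscent_le hlt ((t.not_rel_iff hlt.ne').1 hba)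
    have hpos := h m hm.1.1 hmb
    rw [pathRise_eq_sub_sum _ hm.1.1.le] at hpos
    have := hm.le_sum_ascentCount
    omega

/-- The order in which, for `a ≤ b`, `b` precedes `a` exactly when the path with steps `1 - c j`
stays above its height at `a` up to `b`. -/
def ofSteps (c : ℤ → ℕ) (hc : Function.Periodic c (n : ℤ)) : TITO n where
  rel x y := (y ≤ x ∧ StaysAbove c y x) ∨ (x < y ∧ ¬ StaysAbove c x y)
  refl a := .inl ⟨le_rfl, .self c a⟩
  antisymm a b := by
    rintro (⟨hba, h⟩ | ⟨hab, h⟩) (⟨hab', h'⟩ | ⟨hba', h'⟩)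
    · exact le_antisymm hab' hba
    · exact absurd h h'
    · exact absurd h' h
    · exact absurd hab hba'.not_gt
  trans a b d := by
    rintro (⟨hba, h⟩ | ⟨hab, h⟩) (⟨hdb, h'⟩ | ⟨hbd, h'⟩)
    · exact .inl ⟨hdb.trans hba, h'.trans hdb h⟩
    · have had : a < d := lt_of_not_ge fun hda ↦ h' (h.mono hda)
      exact .inr ⟨had, fun had' ↦ h' (h.trans hba had')⟩
    · rcases le_or_gt d a with hda | had
      · exact .inl ⟨hda, h'.mono hab.le⟩
      · exact .inr ⟨had, fun had' ↦ h (had'.trans had.le h')⟩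
    · exact .inr ⟨hab.trans hbd, fun had ↦ h (had.mono hbd.le)⟩
  total a b := by
    have := StaysAbove.self c a
    grind
  invariant a b := by
    simp only [staysAbove_add_period hc, add_le_add_iff_right, add_lt_add_iff_right]

section OfSteps

variable {c : ℤ → ℕ} (hc : Function.Periodic c (n : ℤ))

lemma ofSteps_rel_iff (hab : a ≤ b) : (ofSteps c hc).rel b a ↔ StaysAbove c a b := by
  simp [ofSteps, hab, hab.not_gt]

lemma avoids312_ofSteps : (ofSteps c hc).Avoids312 := by
  rintro ⟨a, b, m, hab, hbm, hma, hrel⟩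
  rw [ofSteps_rel_iff hc (hab.trans hbm).le] at hma
  have hba := (ofSteps_rel_iff hc hab.le).2 (hma.mono hbm.le)
  exact hab.ne ((ofSteps c hc).antisymm a b hrel hba)

lemma isFirstAscent_ofSteps_iff : (ofSteps c hc).IsFirstAscent a m ↔
    a ≤ m - 1 ∧ StaysAbove c a (m - 1) ∧ pathRise c a (m - 1) < c m := by
  rw [isFirstAscent_iff, ← Int.le_sub_one_iff]
  refine and_congr_right fun ham ↦ ?_
  rw [← not_rel_iff _ (by omega), ofSteps_rel_iff hc (by omega)]
  have hlast := pathRise_add_pathRise c ham (sub_one_lt m).le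
  rw [pathRise_sub_one_self] at hlast
  have hprev : (∀ b, a < b → b < m → (ofSteps c hc).rel b a) ↔ StaysAbove c a (m - 1) := by
    constructor
    · intro h j haj hjm
      exact (ofSteps_rel_iff hc haj.le).1 (h j haj (by omega)) j haj le_rfl
    · intro h b hab hbm
      exact (ofSteps_rel_iff hc hab.le).2 (h.mono (by omega))
  rw [hprev, and_comm]
  refine and_congr_right fun h ↦ ⟨fun hm ↦ ?_, fun hm habove ↦ ?_⟩
  · by_contra! hle
    refine hm fun j haj hjm ↦ ?_
    rcases hjm.eq_or_lt with rfl | hjm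
    · omega
    · exact h j haj (by omega)
  · have := habove m (by omega) le_rfl
    omega

lemma ascentCount_ofSteps [NeZero n] (hrise : ∀ a, 0 ≤ pathRise c a (a + n)) (m : ℤ) :
    (ofSteps c hc).ascentCount m = c m := by
  have hbij : Set.BijOn (fun a ↦ pathRise c a (m - 1))
      {a | (ofSteps c hc).IsFirstAscent a m} (Set.Ico 0 (c m)) := by
    simp only [isFirstAscent_ofSteps_iff]
    refine ⟨fun a ⟨ham, habove, hlt⟩ ↦ ⟨habove.pathRise_nonneg ham, hlt⟩, ?_, ?_⟩
    · rintro a ⟨ham, ha, -⟩ b ⟨hbm, hb, -⟩ heq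
      rcases lt_trichotomy a b with hab | hab | hba
      · exact absurd heq (ha.pathRise_lt hab hbm).ne'
      · exact hab
      · exact absurd heq (hb.pathRise_lt hba ham).ne
    · rintro v ⟨hv, hvc⟩
      have hn := NeZero.pos n
      have hperiod := hrise (m - n)
      rw [sub_add_cancel, ← pathRise_add_pathRise c (show m - n ≤ m - 1 by omega) (by omega),
        pathRise_sub_one_self] at hperiod
      obtain ⟨x, hxm, habove, rfl⟩ :=
        exists_staysAbove_pathRise_eq (c := c) (show m - n ≤ m - 1 by omega) hv (by omega)
      exact ⟨x, ⟨hxm, habove, hvc⟩, rfl⟩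
  rw [ascentCount, hbij.ncard_eq, ← Finset.coe_Ico, Set.ncard_coe_finset, Int.card_Ico]
  simp

end OfSteps

/-- The first-ascent counts of `t`, which depend only on residues mod `n`. -/
noncomputable def ascentCode (t : TITO n) (i : ZMod n) : ℕ := t.ascentCount i.cast

lemma ascentCode_intCast (t : TITO n) (m : ℤ) : t.ascentCode m = t.ascentCount m := by
  rw [ascentCode, ZMod.coe_intCast, Int.emod_def]
  simpa [mul_comm] using t.periodic_ascentCount.sub_zsmul_eq (x := m) (m / n)

variable [NeZero n]

lemma sum_ascentCode_le (t : TITO n) : ∑ i, t.ascentCode i ≤ n := by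
  rw [← sum_Ioc_zmodCast t.ascentCode 0]
  simpa only [ascentCode_intCast] using t.sum_ascentCount_period_le 0

lemma injOn_ascentCode : Set.InjOn ascentCode {t : TITO n | t.Avoids312} := by
  intro s hs t ht hst
  have hcount : s.ascentCount = t.ascentCount := by
    ext m
    rw [← ascentCode_intCast, hst, ascentCode_intCast]
  refine ext_of_lt fun a b hab ↦ ?_
  rw [Avoids312.rel_iff_staysAbove hs hab.le, Avoids312.rel_iff_staysAbove ht hab.le, hcount]

lemma exists_ascentCode_eq {d : ZMod n → ℕ} (hd : ∑ i, d i ≤ n) :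
    ∃ t : TITO n, t.Avoids312 ∧ t.ascentCode = d := by
  have hper : Function.Periodic (fun j : ℤ ↦ d j) (n : ℤ) := fun j ↦ by simp
  have hrise (a : ℤ) : 0 ≤ pathRise (fun j : ℤ ↦ d j) a (a + n) := by
    rw [pathRise_eq_sub_sum _ (by omega), sum_Ioc_zmodCast]
    omega
  refine ⟨ofSteps _ hper, avoids312_ofSteps hper, ?_⟩
  ext i
  rw [ascentCode, ascentCount_ofSteps hper hrise, ZMod.intCast_zmod_cast]

lemma bijOn_ascentCode :
    Set.BijOn ascentCode {t : TITO n | t.Avoids312} {d : ZMod n → ℕ | ∑ i, d i ≤ n} :=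
  ⟨fun t _ ↦ t.sum_ascentCode_le, injOn_ascentCode, fun _ hd ↦ exists_ascentCode_eq hd⟩

end TITO

theorem stmt14 (n : ℕ) (hn : 2 ≤ n) :
    Nat.card {t : TITO n // t.Avoids312} = Nat.choose (2 * n) n := by
  have : NeZero n := ⟨by omega⟩
  calc Nat.card {t : TITO n // t.Avoids312}
      = Nat.card {d : ZMod n → ℕ // ∑ i, d i ≤ n} :=
        Nat.card_congr TITO.bijOn_ascentCode.equiv
    _ = (Fintype.card (ZMod n) + n).choose n := card_sum_le_eq_choose (ZMod n) n
    _ = (2 * n).choose n := by rw [ZMod.card, two_mul]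
end

section
/- The number of 312-avoiding real TITOs equals the type D_n Catalan number: n times the cardinality of the set of 312-avoiding real TITOs equals (3n − 2) · C(2n − 2, n − 1), where C denotes the binomial coefficient. -/
/-!
For a 312-avoiding TITO and an integer `a`, the integers `c ≥ a` with `c ≼ a` form an interval
`[a, c]`, whose right end `c` we call the reach of `a`, or all of `[a, ∞)`, which happens exactly
when `a + n ≼ a`. Let `f(c)` be the number of integers whose reach is `c`; this is an `n`-periodic
function of `c`. It determines the TITO: if `H` is a height function on `ℤ` with increments
`f - 1`, then for `a < c` one has `c ≼ a` if and only if `H` stays below `H(a)` on `(a, c]`.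
Conversely, every `f : ℤ/n → ℕ` of total at most `n` arises, because the integers with reach `c`
are then mapped by `H` bijectively onto `[H(c), H(c + 1)]`.

The total of `f` is `n` minus the number of residue classes with `a + n ≼ a`. All other integers
come before these classes in the TITO, so one of these classes is order-convex if and only if it
is the only one. The 312-avoiding real TITOs therefore correspond to the `f` whose total is at most
`n` and different from `n - 1`, and their number is `C(2n, n) - C(2n - 2, n - 1)`.
-/

section ResidueClasses

variable {n : ℕ}

theorem intCast_zmod_eq_iff_exists_add {a b : ℤ} :
    (a : ZMod n) = b ↔ ∃ d : ℤ, (n : ℤ) ∣ d ∧ b = a + d := by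
  rw [ZMod.intCast_eq_intCast_iff_dvd_sub]
  exact ⟨fun h => ⟨b - a, h, by ring⟩, fun ⟨d, hd, hb⟩ => by simpa [hb] using hd⟩

theorem bijOn_intCast_zmod_Ico [NeZero n] (a : ℤ) :
    Set.BijOn (fun i : ℤ => (i : ZMod n)) (Set.Ico a (a + n)) Set.univ := by
  have hn : (0 : ℤ) < n := by exact_mod_cast Nat.pos_of_ne_zero (NeZero.ne n)
  refine ⟨Set.mapsTo_univ _ _, fun x hx y hy hxy => ?_, fun r _ => ?_⟩
  · obtain ⟨hax, hxa⟩ := hx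
    obtain ⟨hay, hya⟩ := hy
    have hdvd := (ZMod.intCast_eq_intCast_iff_dvd_sub x y n).1 hxy
    have := Int.eq_zero_of_abs_lt_dvd hdvd (abs_lt.2 ⟨by omega, by omega⟩)
    omega
  · refine ⟨a + (r.cast - a) % n, ⟨?_, ?_⟩, ?_⟩
    · have := Int.emod_nonneg (r.cast - a) hn.ne'
      omega
    · have := Int.emod_lt_of_pos (r.cast - a) hn
      omega
    · simp

theorem sum_Ico_intCast_zmod [NeZero n] {M : Type*} [AddCommMonoid M] (f : ZMod n → M) (a : ℤ) :
    ∑ i ∈ Finset.Ico a (a + n), f i = ∑ r, f r := by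
  have hbij := bijOn_intCast_zmod_Ico (n := n) a
  refine Finset.sum_nbij (fun i : ℤ => (i : ZMod n)) (fun _ _ => Finset.mem_univ _) ?_ ?_
    fun _ _ => rfl
  · simpa using hbij.injOn
  · simpa using hbij.surjOn

end ResidueClasses

section Height

/-- The antiderivative on `ℤ` of the integer sequence `w` that vanishes at `0`; one of the two sums
is always empty. -/
noncomputable def height (w : ℤ → ℤ) (x : ℤ) : ℤ :=
  ∑ i ∈ Finset.Ico 0 x, w i - ∑ i ∈ Finset.Ico x 0, w i

theorem height_add_one (w : ℤ → ℤ) (x : ℤ) : height w (x + 1) = height w x + w x := by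
  rcases le_or_gt 0 x with hx | hx
  · rw [height, height, Finset.Ico_eq_empty_of_le hx,
      Finset.Ico_eq_empty_of_le (show 0 ≤ x + 1 by omega),
      ← Finset.sum_Ico_add_eq_sum_Ico_add_one hx]
    ring
  · rw [height, height, Finset.Ico_eq_empty_of_le hx.le,
      Finset.Ico_eq_empty_of_le (show x + 1 ≤ 0 by omega),
      ← Finset.insert_Ico_add_one_left_eq_Ico hx, Finset.sum_insert (by simp)]
    ring

theorem height_sub_height (w : ℤ → ℤ) {a b : ℤ} (hab : a ≤ b) :
    height w b - height w a = ∑ i ∈ Finset.Ico a b, w i := by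
  induction b, hab using Int.leInduction with
  | base => simp
  | succ b hab ih =>
    rw [← Finset.sum_Ico_add_eq_sum_Ico_add_one hab, ← ih, height_add_one]
    ring

/-- `H a` exceeds all values of `H` on the interval `(a, c]`. -/
def Dominates {α : Type*} [LT α] (H : ℤ → α) (a c : ℤ) : Prop :=
  ∀ d ∈ Set.Ioc a c, H d < H a

namespace Dominates

variable {α : Type*}

theorem refl [LT α] (H : ℤ → α) (a : ℤ) : Dominates H a a := by
  simp [Dominates]

theorem mono [LT α] {H : ℤ → α} {a b c : ℤ} (h : Dominates H a c) (hbc : b ≤ c) :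
    Dominates H a b :=
  fun d hd => h d ⟨hd.1, hd.2.trans hbc⟩

theorem trans [Preorder α] {H : ℤ → α} {a b c : ℤ} (hab : a ≤ b) (h : Dominates H a b)
    (h' : Dominates H b c) : Dominates H a c := by
  rcases hab.eq_or_lt with rfl | hab
  · exact h'
  intro d hd
  rcases le_or_gt d b with hdb | hbd
  · exact h d ⟨hd.1, hdb⟩
  · exact (h' d ⟨hbd, hd.2⟩).trans (h b ⟨hab, le_rfl⟩)

theorem add_iff [LT α] {H : ℤ → α} {s : ℤ} (hH : ∀ x y, H (x + s) < H (y + s) ↔ H x < H y)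
    (a c : ℤ) : Dominates H (a + s) (c + s) ↔ Dominates H a c := by
  constructor
  · exact fun h d hd => (hH d a).1 (h (d + s) (by simpa using hd))
  · intro h d hd
    have hd' : d - s ∈ Set.Ioc a c := by simpa [lt_sub_iff_add_lt] using hd
    simpa using (hH (d - s) a).2 (h (d - s) hd')

theorem add_one_iff [LT α] {H : ℤ → α} {a c : ℤ} (hac : a ≤ c) :
    Dominates H a (c + 1) ↔ Dominates H a c ∧ H (c + 1) < H a := by
  refine ⟨fun h => ⟨h.mono (by omega), h (c + 1) ⟨by omega, le_rfl⟩⟩, fun ⟨h, hlast⟩ d hd => ?_⟩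
  rcases hd.2.eq_or_lt with rfl | hdc
  · exact hlast
  · exact h d ⟨hd.1, by omega⟩

/-- The preimage of a level `j` is the last time `a ≤ c` at which `H a ≥ j`. -/
theorem bijOn_Icc {H : ℤ → ℤ} (hstep : ∀ x, H x ≤ H (x + 1) + 1) {b c : ℤ} (hbc : b ≤ c)
    (hb : H (c + 1) ≤ H b) :
    Set.BijOn H {a | a ≤ c ∧ Dominates H a c ∧ H a ≤ H (c + 1)} (Set.Icc (H c) (H (c + 1))) := by
  refine ⟨fun a ⟨hac, hdom, hle⟩ => ⟨?_, hle⟩, ?_, fun j ⟨hcj, hjc⟩ => ?_⟩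
  · rcases hac.eq_or_lt with rfl | hac
    · exact le_rfl
    · exact (hdom c ⟨hac, le_rfl⟩).le
  · intro a ⟨hac, hdom, _⟩ a' ⟨hac', hdom', _⟩ heq
    rcases lt_trichotomy a a' with h | h | h
    · exact absurd heq (hdom a' ⟨h, hac'⟩).ne'
    · exact h
    · exact absurd heq (hdom' a ⟨h, hac⟩).ne
  · obtain ⟨a, ⟨hac, hja⟩, hmax⟩ := Int.exists_greatest_of_bdd
      (P := fun a => a ≤ c ∧ j ≤ H a) ⟨c, fun _ hz => hz.1⟩ ⟨b, hbc, hjc.trans hb⟩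
    have hlt : ∀ d ∈ Set.Ioc a c, H d < j := fun d hd => by
      by_contra! hjd
      exact hd.1.not_ge (hmax d ⟨hd.2, hjd⟩)
    have haj : H a = j := by
      refine le_antisymm ?_ hja
      rcases hac.eq_or_lt with rfl | hac
      · exact hcj
      · have := hlt (a + 1) ⟨by omega, by omega⟩
        have := hstep a
        omega
    exact ⟨a, ⟨hac, fun d hd => haj ▸ hlt d hd, haj ▸ hjc⟩, haj⟩

end Dominates

end Height

namespace TITO

section Basic

variable {n : ℕ} (t : TITO n)

theorem rel_of_not_rel {t : TITO n} {a b : ℤ} (h : ¬ t.rel a b) : t.rel b a :=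
  (t.total a b).resolve_left h

theorem eq_of_inversions_eq {t t' : TITO n} (h : t.Inversions = t'.Inversions) : t = t' := by
  have hinv : ∀ a c, a < c → (t.rel c a ↔ t'.rel c a) := fun a c hac => by
    simpa [Inversions, hac] using Set.ext_iff.1 h (a, c)
  have rel_iff_not : ∀ (s : TITO n) (a c : ℤ), a < c → (s.rel a c ↔ ¬ s.rel c a) :=
    fun s a c hac => ⟨fun h h' => hac.ne (s.antisymm _ _ h h'), rel_of_not_rel⟩
  have hrel : t.rel = t'.rel := by
    ext x y
    rcases lt_trichotomy x y with hxy | rfl | hxy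
    · rw [rel_iff_not t x y hxy, rel_iff_not t' x y hxy, hinv x y hxy]
    · exact iff_of_true (t.refl x) (t'.refl x)
    · exact hinv y x hxy
  cases t
  cases t'
  congr

theorem rel_add_iff_of_dvd {d : ℤ} (hd : (n : ℤ) ∣ d) (a b : ℤ) :
    t.rel (a + d) (b + d) ↔ t.rel a b := by
  obtain ⟨k, rfl⟩ := hd
  have hper : Function.Periodic (fun x => t.rel (a + x) (b + x)) (n : ℤ) := fun x => by
    simp only [← add_assoc, ← t.invariant]
  simpa [mul_comm] using iff_of_eq (hper.int_mul k 0)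

/-- The integer `a` belongs to a waning residue class. -/
def WanesAt (a : ℤ) : Prop := t.rel (a + n) a

theorem wanesAt_add_iff_of_dvd {d : ℤ} (hd : (n : ℤ) ∣ d) (a : ℤ) :
    t.WanesAt (a + d) ↔ t.WanesAt a := by
  rw [WanesAt, add_right_comm, t.rel_add_iff_of_dvd hd, WanesAt]

theorem rel_add_self_iff_not_wanesAt [NeZero n] {a : ℤ} : t.rel a (a + n) ↔ ¬ t.WanesAt a := by
  refine ⟨fun h h' => NeZero.ne n ?_, rel_of_not_rel⟩
  have := t.antisymm _ _ h h'
  omega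

/-- The residue classes mod `n` on which the TITO is waning. The canonical integer representative
`r.cast` stands for the class `r`. -/
def waningClasses : Set (ZMod n) := {r | t.WanesAt r.cast}

theorem intCast_mem_waningClasses {a : ℤ} : (a : ZMod n) ∈ t.waningClasses ↔ t.WanesAt a := by
  obtain ⟨d, hd, ha⟩ := intCast_zmod_eq_iff_exists_add.1 (ZMod.intCast_zmod_cast (a : ZMod n))
  rw [waningClasses, Set.mem_ofPred_eq]
  conv_rhs => rw [ha, t.wanesAt_add_iff_of_dvd hd]

/-- The integer `c` is the right end of the initial run of integers `≥ a` that precede `a`. When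
the TITO avoids 312, this run consists of all `x ≥ a` with `x ≼ a`. -/
def IsReach (a c : ℤ) : Prop := a ≤ c ∧ t.rel c a ∧ ¬ t.rel (c + 1) a

theorem isReach_add_iff_of_dvd {d : ℤ} (hd : (n : ℤ) ∣ d) (a c : ℤ) :
    t.IsReach (a + d) (c + d) ↔ t.IsReach a c := by
  simp only [IsReach, add_le_add_iff_right, add_right_comm c d 1, t.rel_add_iff_of_dvd hd]

theorem exists_isReach_of_not_rel {a c : ℤ} (hac : a ≤ c) (h : ¬ t.rel c a) :
    ∃ d < c, t.IsReach a d := by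
  obtain ⟨d, ⟨had, hda⟩, hmin⟩ := Int.exists_least_of_bdd
    (P := fun d => a ≤ d ∧ ¬ t.rel d a) ⟨a, fun _ hz => hz.1⟩ ⟨c, hac, h⟩
  have hne : a ≠ d := fun h => hda (h ▸ t.refl a)
  have hdc := hmin c ⟨hac, h⟩
  refine ⟨d - 1, by omega, by omega, ?_, by simpa using hda⟩
  by_contra hpred
  have := hmin (d - 1) ⟨by omega, hpred⟩
  omega

/-- The number of integers whose reach is `c`, as a function of the residue class of `c`. -/
noncomputable def reachCount (r : ZMod n) : ℕ := {a | t.IsReach a r.cast}.ncard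

theorem reachCount_intCast (c : ℤ) : t.reachCount (c : ZMod n) = {a | t.IsReach a c}.ncard := by
  obtain ⟨d, hd, hc⟩ := intCast_zmod_eq_iff_exists_add.1 (ZMod.intCast_zmod_cast (c : ZMod n))
  have himage : {a | t.IsReach a c} = (· + d) '' {a | t.IsReach a (c : ZMod n).cast} := by
    rw [Set.image_add_right]
    ext a
    change t.IsReach a c ↔ t.IsReach (a + -d) _
    rw [← t.isReach_add_iff_of_dvd hd (a + -d), neg_add_cancel_right, ← hc]
  rw [reachCount, himage, Set.ncard_image_of_injective _ (add_left_injective d)]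

end Basic

namespace Avoids312

variable {n : ℕ} {t : TITO n}

theorem rel_of_le_of_le_s15 (ht : t.Avoids312) {a b c : ℤ} (hab : a ≤ b) (hbc : b ≤ c) (h : t.rel c a) :
    t.rel b a := by
  rcases hab.eq_or_lt with rfl | hab
  · exact t.refl a
  rcases hbc.eq_or_lt with rfl | hbc
  · exact h
  exact rel_of_not_rel fun hba => ht ⟨a, b, c, hab, hbc, h, hba⟩

theorem isReach_unique (ht : t.Avoids312) {a c d : ℤ} (hc : t.IsReach a c) (hd : t.IsReach a d) :
    c = d := by
  have le : ∀ {x y}, t.IsReach a x → t.IsReach a y → x ≤ y := fun hx hy => by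
    by_contra! hyx
    exact hy.2.2 (ht.rel_of_le_of_le_s15 (hy.1.trans (by omega)) hyx hx.2.1)
  exact (le hc hd).antisymm (le hd hc)

variable [NeZero n]

theorem rel_of_wanesAt (ht : t.Avoids312) {a b : ℤ} (h : t.WanesAt a) (hab : a ≤ b) :
    t.rel b a := by
  by_contra hba
  obtain ⟨c, -, hac, hca, hnot⟩ := t.exists_isReach_of_not_rel hab hba
  have hn := NeZero.pos n
  rcases le_or_gt (c + 1) (a + n) with hcn | hcn
  · exact hnot (ht.rel_of_le_of_le_s15 (by omega) hcn h)
  · have hback : t.rel (c + 1 - n) a := ht.rel_of_le_of_le_s15 (by omega) (by omega) hca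
    rw [t.invariant, sub_add_cancel] at hback
    exact hnot (t.trans _ _ _ hback h)

theorem not_wanesAt_iff_exists_isReach (ht : t.Avoids312) {a : ℤ} :
    ¬ t.WanesAt a ↔ ∃ c, t.IsReach a c := by
  constructor
  · intro h
    obtain ⟨c, -, hc⟩ := t.exists_isReach_of_not_rel (by omega) h
    exact ⟨c, hc⟩
  · rintro ⟨c, hac, -, hnot⟩ h
    exact hnot (ht.rel_of_wanesAt h (by omega))

theorem finite_setOf_isReach (ht : t.Avoids312) (c : ℤ) : {a | t.IsReach a c}.Finite := by
  refine (Set.finite_Ioc (c - n) c).subset fun a ha => ⟨?_, ha.1⟩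
  by_contra! hle
  exact ht.not_wanesAt_iff_exists_isReach.2 ⟨c, ha⟩
    (ht.rel_of_le_of_le_s15 (by omega) (by omega) ha.2.1)

theorem sum_reachCount_Ico (ht : t.Avoids312) (x y : ℤ) :
    ∑ c ∈ Finset.Ico x y, t.reachCount c = {a | ∃ c ∈ Set.Ico x y, t.IsReach a c}.ncard := by
  have hunion : {a | ∃ c ∈ Set.Ico x y, t.IsReach a c} =
      ⋃ c ∈ Set.Ico x y, {a | t.IsReach a c} := by
    ext a
    simp
  have hdisj : (Set.Ico x y).PairwiseDisjoint fun c => {a | t.IsReach a c} :=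
    fun _ _ _ _ hcd => Set.disjoint_left.2 fun _ hc hd => hcd (ht.isReach_unique hc hd)
  rw [hunion, (Set.finite_Ico x y).ncard_biUnion (fun c _ => ht.finite_setOf_isReach c) hdisj,
    ← Finset.coe_Ico, finsum_mem_coe_finset]
  exact Finset.sum_congr rfl fun c _ => t.reachCount_intCast c

theorem bijOn_intCast_isReach_compl_waningClasses (ht : t.Avoids312) :
    Set.BijOn (fun a : ℤ => (a : ZMod n)) {a | ∃ c ∈ Set.Ico (0 : ℤ) n, t.IsReach a c}
      t.waningClassesᶜ := by
  have hIco := bijOn_intCast_zmod_Ico (n := n) 0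
  rw [zero_add] at hIco
  refine ⟨fun a ⟨c, _, hac⟩ => ?_, fun a ⟨c, hc, hac⟩ b ⟨c', hc', hbc'⟩ hab => ?_, fun r hr => ?_⟩
  · rw [Set.mem_compl_iff, t.intCast_mem_waningClasses, ht.not_wanesAt_iff_exists_isReach]
    exact ⟨c, hac⟩
  · obtain ⟨d, hd, rfl⟩ := intCast_zmod_eq_iff_exists_add.1 hab
    have hcd : c + d = c' := ht.isReach_unique ((t.isReach_add_iff_of_dvd hd a c).2 hac) hbc'
    have hcc' : c = c' := hIco.injOn hc hc' (intCast_zmod_eq_iff_exists_add.2 ⟨d, hd, hcd.symm⟩)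
    omega
  · obtain ⟨a, rfl⟩ := ZMod.intCast_surjective r
    rw [Set.mem_compl_iff, t.intCast_mem_waningClasses, ht.not_wanesAt_iff_exists_isReach] at hr
    obtain ⟨c, hac⟩ := hr
    obtain ⟨c', hc', hcc'⟩ := hIco.surjOn (Set.mem_univ (c : ZMod n))
    obtain ⟨d, hd, rfl⟩ := intCast_zmod_eq_iff_exists_add.1 hcc'.symm
    exact ⟨a + d, ⟨c + d, hc', (t.isReach_add_iff_of_dvd hd a c).2 hac⟩,
      (intCast_zmod_eq_iff_exists_add.2 ⟨d, hd, rfl⟩).symm⟩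

theorem sum_reachCount_add_ncard_waningClasses (ht : t.Avoids312) :
    ∑ r, t.reachCount r + t.waningClasses.ncard = n := by
  have hbij := ht.bijOn_intCast_isReach_compl_waningClasses
  rw [← sum_Ico_intCast_zmod t.reachCount 0, zero_add, ht.sum_reachCount_Ico,
    ← hbij.injOn.ncard_image, hbij.image_eq, Set.ncard_compl_add_ncard, Nat.card_zmod]

theorem sum_reachCount_le (ht : t.Avoids312) : ∑ r, t.reachCount r ≤ n :=
  (Nat.le_add_right _ _).trans_eq ht.sum_reachCount_add_ncard_waningClasses

theorem wanesAt_of_rel (ht : t.Avoids312) {a b : ℤ} (ha : t.WanesAt a) (hab : t.rel a b) :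
    t.WanesAt b := by
  have hmax : t.rel (max a (b + n)) b :=
    t.trans _ _ _ (ht.rel_of_wanesAt ha (le_max_left _ _)) hab
  exact ht.rel_of_le_of_le_s15 (by omega) (le_max_right _ _) hmax

theorem orderConvex_residueClass_iff (ht : t.Avoids312) {a : ℤ} (ha : t.WanesAt a) :
    t.OrderConvex {x : ℤ | ∃ k : ℤ, x = a + k * n} ↔ t.waningClasses = {(a : ZMod n)} := by
  have hclass : {x : ℤ | ∃ k : ℤ, x = a + k * n} = {x : ℤ | (x : ZMod n) = a} := by
    ext x
    rw [Set.mem_ofPred_eq, Set.mem_ofPred_eq, eq_comm (a := (x : ZMod n)),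
      intCast_zmod_eq_iff_exists_add]
    simp [dvd_def, mul_comm]
  rw [hclass]
  constructor
  · intro hconv
    refine Set.eq_singleton_iff_unique_mem.2 ⟨t.intCast_mem_waningClasses.2 ha, fun r hr => ?_⟩
    obtain ⟨b, ⟨hab, hba⟩, rfl⟩ := (bijOn_intCast_zmod_Ico a).surjOn (Set.mem_univ r)
    rw [t.intCast_mem_waningClasses] at hr
    exact hconv (a + n) (by simp) a rfl b (ht.rel_of_wanesAt hr hba.le) (ht.rel_of_wanesAt ha hab)
  · intro hsingle x hx z _ y hxy _
    have hxw : t.WanesAt x := by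
      rw [← t.intCast_mem_waningClasses, hsingle]
      exact hx
    have hyw := t.intCast_mem_waningClasses.2 (ht.wanesAt_of_rel hxw hxy)
    rwa [hsingle] at hyw

theorem isReal_iff_ncard_waningClasses_ne_one (ht : t.Avoids312) :
    t.IsReal ↔ t.waningClasses.ncard ≠ 1 := by
  rw [ne_eq, Set.ncard_eq_one, not_exists]
  constructor
  · intro hreal r hr
    obtain ⟨a, rfl⟩ := ZMod.intCast_surjective r
    have ha : t.WanesAt a := t.intCast_mem_waningClasses.1 (hr ▸ rfl)
    exact t.rel_add_self_iff_not_wanesAt.1 (hreal a ((ht.orderConvex_residueClass_iff ha).2 hr)) ha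
  · intro hne a hconv
    exact t.rel_add_self_iff_not_wanesAt.2 fun ha =>
      hne a ((ht.orderConvex_residueClass_iff ha).1 hconv)

theorem isReal_iff_sum_reachCount_ne (ht : t.Avoids312) :
    t.IsReal ↔ ∑ r, t.reachCount r ≠ n - 1 := by
  have hn := NeZero.pos n
  have hsum := ht.sum_reachCount_add_ncard_waningClasses
  rw [ht.isReal_iff_ncard_waningClasses_ne_one]
  omega

theorem sum_reachCount_Ico_lt_of_rel (ht : t.Avoids312) {a d : ℤ} (had : a < d) (h : t.rel d a) :
    (∑ i ∈ Finset.Ico a d, t.reachCount i : ℤ) < d - a := by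
  have hsub : {x | ∃ c ∈ Set.Ico a d, t.IsReach x c} ⊆ (Finset.Ioo a d : Set ℤ) := by
    rintro x ⟨c, ⟨hac, hcd⟩, hxc, hcx, hnot⟩
    rw [Finset.coe_Ioo]
    refine ⟨?_, by omega⟩
    by_contra! hxa
    have hdx : t.rel d x := t.trans _ _ _ h (ht.rel_of_le_of_le_s15 hxa hac hcx)
    exact hnot (ht.rel_of_le_of_le_s15 (by omega) (by omega) hdx)
  have hcard := Set.ncard_le_ncard hsub
  rw [← ht.sum_reachCount_Ico, Set.ncard_coe_finset, Int.card_Ioo] at hcard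
  rw [← Nat.cast_sum]
  omega

theorem le_sum_reachCount_Ico_of_isReach (ht : t.Avoids312) {a d : ℤ} (h : t.IsReach a d) :
    d + 1 - a ≤ (∑ i ∈ Finset.Ico a (d + 1), t.reachCount i : ℤ) := by
  obtain ⟨-, hda, hnot⟩ := h
  have hsub : (Finset.Ico a (d + 1) : Set ℤ) ⊆ {x | ∃ c ∈ Set.Ico a (d + 1), t.IsReach x c} := by
    intro x hx
    rw [Finset.coe_Ico] at hx
    obtain ⟨hax, hxd⟩ := hx
    have hxa : t.rel x a := ht.rel_of_le_of_le_s15 hax (by omega) hda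
    obtain ⟨c, hcd, hxc⟩ := t.exists_isReach_of_not_rel hxd.le
      fun hdx => hnot (t.trans _ _ _ hdx hxa)
    exact ⟨c, ⟨hax.trans hxc.1, hcd⟩, hxc⟩
  have hfin : {x | ∃ c ∈ Set.Ico a (d + 1), t.IsReach x c}.Finite := by
    refine ((Set.finite_Ico a (d + 1)).biUnion fun c _ => ht.finite_setOf_isReach c).subset ?_
    exact fun x ⟨c, hc, hxc⟩ => Set.mem_biUnion hc hxc
  have hcard := Set.ncard_le_ncard hsub hfin
  rw [← ht.sum_reachCount_Ico, Set.ncard_coe_finset, Int.card_Ico] at hcard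
  rw [← Nat.cast_sum]
  omega

theorem rel_iff_forall_sum_reachCount_lt (ht : t.Avoids312) {a c : ℤ} (hac : a ≤ c) :
    t.rel c a ↔ ∀ d ∈ Set.Ioc a c, (∑ i ∈ Finset.Ico a d, t.reachCount i : ℤ) < d - a := by
  refine ⟨fun h d hd => ht.sum_reachCount_Ico_lt_of_rel hd.1
    (ht.rel_of_le_of_le_s15 hd.1.le hd.2 h), fun h => ?_⟩
  by_contra hca
  obtain ⟨d, hdc, hd⟩ := t.exists_isReach_of_not_rel hac hca
  have had := hd.1
  exact (h (d + 1) ⟨by omega, by omega⟩).not_ge (ht.le_sum_reachCount_Ico_of_isReach hd)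

end Avoids312

section OfHeight

variable {n : ℕ} {α : Type*} [LinearOrder α] (H : ℤ → α)

/-- The 312-avoiding TITO in which, for `a < c`, the integer `c` precedes `a` if and only if
`Dominates H a c`. -/
def ofHeight (hH : ∀ x y, H (x + n) < H (y + n) ↔ H x < H y) : TITO n where
  rel x y := (x < y ∧ ¬ Dominates H x y) ∨ (y ≤ x ∧ Dominates H y x)
  refl a := Or.inr ⟨le_rfl, Dominates.refl H a⟩
  antisymm a b := by
    rintro (⟨hab, hn⟩ | ⟨hba, h⟩) (⟨hba', hn'⟩ | ⟨hab', h'⟩)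
    · omega
    · exact absurd h' hn
    · exact absurd h hn'
    · omega
  trans a b c := by
    rintro (⟨hab, hn⟩ | ⟨hba, h⟩) (⟨hbc, hn'⟩ | ⟨hcb, h'⟩)
    · exact Or.inl ⟨hab.trans hbc, fun h => hn (h.mono hbc.le)⟩
    · rcases lt_or_ge a c with hac | hca
      · exact Or.inl ⟨hac, fun h => hn (h.trans hac.le h')⟩
      · exact Or.inr ⟨hca, h'.mono hab.le⟩
    · rcases lt_or_ge a c with hac | hca
      · exact Or.inl ⟨hac, fun h' => hn' (h.trans hba h')⟩
      · exact absurd (h.mono hca) hn'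
    · exact Or.inr ⟨hcb.trans hba, h'.trans hcb h⟩
  total a b := by
    rcases lt_trichotomy a b with hab | rfl | hba
    · by_cases h : Dominates H a b
      · exact Or.inr (Or.inr ⟨hab.le, h⟩)
      · exact Or.inl (Or.inl ⟨hab, h⟩)
    · exact Or.inl (Or.inr ⟨le_rfl, Dominates.refl H a⟩)
    · by_cases h : Dominates H b a
      · exact Or.inl (Or.inr ⟨hba.le, h⟩)
      · exact Or.inr (Or.inl ⟨hba, h⟩)
  invariant a b := by
    simp only [Dominates.add_iff hH, add_lt_add_iff_right, add_le_add_iff_right]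

variable {H} {hH : ∀ x y, H (x + n) < H (y + n) ↔ H x < H y}

theorem ofHeight_rel_iff {a c : ℤ} (hac : a ≤ c) : (ofHeight H hH).rel c a ↔ Dominates H a c := by
  simp [ofHeight, hac, hac.not_gt]

theorem avoids312_ofHeight : (ofHeight H hH).Avoids312 := by
  rintro ⟨a, b, c, hab, hbc, hca, hrel⟩
  rw [ofHeight_rel_iff (hab.trans hbc).le] at hca
  exact hab.ne ((ofHeight H hH).antisymm _ _ hrel
    ((ofHeight_rel_iff hab.le).2 (hca.mono hbc.le)))

theorem isReach_ofHeight_iff {a c : ℤ} :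
    (ofHeight H hH).IsReach a c ↔ a ≤ c ∧ Dominates H a c ∧ H a ≤ H (c + 1) := by
  refine and_congr_right fun hac => ?_
  rw [ofHeight_rel_iff hac, ofHeight_rel_iff (by omega), Dominates.add_one_iff hac, ← not_lt]
  tauto

end OfHeight

section ReachCounts

variable {n : ℕ}

/-- The height function of the prospective reach counts `f`. -/
noncomputable def countHeight (f : ZMod n → ℕ) : ℤ → ℤ := height fun i => (f i : ℤ) - 1

theorem countHeight_sub (f : ZMod n → ℕ) {a b : ℤ} (hab : a ≤ b) :
    countHeight f b - countHeight f a = (∑ i ∈ Finset.Ico a b, f i : ℤ) - (b - a) := by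
  rw [countHeight, height_sub_height _ hab, Finset.sum_sub_distrib]
  simp [hab]

theorem countHeight_add_one (f : ZMod n → ℕ) (x : ℤ) :
    countHeight f (x + 1) = countHeight f x + f x - 1 := by
  rw [countHeight, height_add_one]
  ring

variable [NeZero n]

theorem countHeight_add_self (f : ZMod n → ℕ) (x : ℤ) :
    countHeight f (x + n) = countHeight f x + (∑ r, f r : ℕ) - n := by
  have hsub := countHeight_sub f (show x ≤ x + n by omega)
  rw [← Nat.cast_sum, sum_Ico_intCast_zmod f] at hsub
  linarith

/-- The TITO whose height function is that of `f`. Its reach counts are `f` when `∑ r, f r ≤ n`. -/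
noncomputable def ofReachCounts (f : ZMod n → ℕ) : TITO n :=
  ofHeight (countHeight f) fun x y => by simp [countHeight_add_self]

theorem ofReachCounts_reachCount {t : TITO n} (ht : t.Avoids312) :
    ofReachCounts t.reachCount = t := by
  refine eq_of_inversions_eq (Set.ext fun ⟨a, c⟩ => and_congr_right fun (hac : a < c) => ?_)
  rw [ofReachCounts, ofHeight_rel_iff hac.le, ht.rel_iff_forall_sum_reachCount_lt hac.le]
  refine forall₂_congr fun d hd => ?_
  rw [← sub_neg, countHeight_sub _ hd.1.le, sub_neg]

theorem reachCount_ofReachCounts {f : ZMod n → ℕ} (hf : ∑ r, f r ≤ n) :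
    (ofReachCounts f).reachCount = f := by
  funext r
  obtain ⟨c, rfl⟩ := ZMod.intCast_surjective r
  have hn := NeZero.pos n
  have hstep : ∀ x, countHeight f x ≤ countHeight f (x + 1) + 1 := fun x => by
    rw [countHeight_add_one]
    omega
  have hperiod := countHeight_add_self f (c + 1 - n)
  rw [sub_add_cancel] at hperiod
  have hbij := Dominates.bijOn_Icc hstep (show c + 1 - n ≤ c by omega) (by omega)
  rw [reachCount_intCast, ofReachCounts]
  simp only [isReach_ofHeight_iff]
  rw [← hbij.injOn.ncard_image, hbij.image_eq, ← Finset.coe_Icc, Set.ncard_coe_finset,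
    Int.card_Icc, countHeight_add_one]
  omega

/-- A 312-avoiding TITO is determined by its reach counts. -/
noncomputable def avoids312EquivReachCounts :
    {t : TITO n // t.Avoids312} ≃ {f : ZMod n → ℕ // ∑ r, f r ≤ n} where
  toFun t := ⟨t.1.reachCount, t.2.sum_reachCount_le⟩
  invFun f := ⟨ofReachCounts f.1, avoids312_ofHeight⟩
  left_inv t := Subtype.ext (ofReachCounts_reachCount t.2)
  right_inv f := Subtype.ext (reachCount_ofReachCounts f.2)

theorem card_avoids312_isReal :
    Nat.card {t : TITO n // t.Avoids312 ∧ t.IsReal} =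
      Nat.card {f : ZMod n → ℕ // ∑ r, f r ∈ (Finset.range (n + 1)).erase (n - 1)} :=
  Nat.card_congr <| calc
    {t : TITO n // t.Avoids312 ∧ t.IsReal}
      ≃ {t : {t : TITO n // t.Avoids312} // t.1.IsReal} :=
        (Equiv.subtypeSubtypeEquivSubtypeInter _ _).symm
    _ ≃ {f : {f : ZMod n → ℕ // ∑ r, f r ≤ n} // ∑ r, f.1 r ≠ n - 1} :=
        avoids312EquivReachCounts.subtypeEquiv fun t => t.2.isReal_iff_sum_reachCount_ne
    _ ≃ {f : ZMod n → ℕ // ∑ r, f r ≤ n ∧ ∑ r, f r ≠ n - 1} :=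
        Equiv.subtypeSubtypeEquivSubtypeInter _ fun f : ZMod n → ℕ => ∑ r, f r ≠ n - 1
    _ ≃ {f : ZMod n → ℕ // ∑ r, f r ∈ (Finset.range (n + 1)).erase (n - 1)} :=
        Equiv.subtypeEquivRight fun f => by
          rw [Finset.mem_erase, Finset.mem_range_succ_iff, and_comm]

end ReachCounts

end TITO

section Counting

theorem card_piAntidiag_univ {ι : Type*} [Fintype ι] [DecidableEq ι] (k : ℕ) :
    (Finset.univ.piAntidiag k : Finset (ι → ℕ)).card = (Fintype.card ι).multichoose k := by
  rw [← Nat.subtype_card (p := fun f : ι → ℕ => ∑ i, f i = k) _ (by simp),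
    ← Nat.card_congr (Sym.equivNatSumOfFintype ι k), Nat.card_eq_fintype_card,
    Sym.card_sym_eq_multichoose]

theorem card_sum_mem {ι : Type*} [Fintype ι] (K : Finset ℕ) :
    Nat.card {f : ι → ℕ // ∑ i, f i ∈ K} = ∑ k ∈ K, (Fintype.card ι).multichoose k := by
  classical
  have hdisj : (K : Set ℕ).PairwiseDisjoint
      fun k => (Finset.univ.piAntidiag k : Finset (ι → ℕ)) :=
    fun k _ l _ hkl => Finset.disjoint_left.2 fun f hk hl => hkl <| by
      rw [← (Finset.mem_piAntidiag.1 hk).1, (Finset.mem_piAntidiag.1 hl).1]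
  rw [Nat.subtype_card (K.biUnion fun k => Finset.univ.piAntidiag k) (by simp),
    Finset.card_biUnion hdisj]
  simp only [card_piAntidiag_univ]

theorem sum_multichoose_erase_add (n : ℕ) :
    ∑ k ∈ (Finset.range (n + 1)).erase (n - 1), n.multichoose k + (2 * n - 2).choose (n - 1) =
      (2 * n).choose n := by
  have hmulti : (2 * n - 2).choose (n - 1) = n.multichoose (n - 1) := by
    rw [Nat.multichoose_eq]
    congr 1
    omega
  rw [hmulti, Finset.sum_erase_add _ _ (by simp), Nat.sum_range_multichoose, two_mul]

theorem mul_choose_two_mul_self {n : ℕ} (hn : n ≠ 0) :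
    n * (2 * n).choose n = (4 * n - 2) * (2 * n - 2).choose (n - 1) := by
  obtain ⟨m, rfl⟩ := Nat.exists_eq_succ_of_ne_zero hn
  have h := Nat.succ_mul_centralBinom_succ m
  simp only [Nat.centralBinom] at h
  rw [Nat.succ_eq_add_one, h]
  congr 1
  omega

end Counting

theorem stmt15 (n : ℕ) (hn : 2 ≤ n) :
    n * Nat.card {t : TITO n // t.Avoids312 ∧ t.IsReal} =
      (3 * n - 2) * Nat.choose (2 * n - 2) (n - 1) := by
  have hn0 : n ≠ 0 := by omega
  have : NeZero n := ⟨hn0⟩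
  rw [TITO.card_avoids312_isReal, card_sum_mem, ZMod.card]
  refine Nat.add_right_cancel (m := n * (2 * n - 2).choose (n - 1)) ?_
  calc n * ∑ k ∈ (Finset.range (n + 1)).erase (n - 1), n.multichoose k
        + n * (2 * n - 2).choose (n - 1)
      = n * (2 * n).choose n := by rw [← mul_add, sum_multichoose_erase_add]
    _ = (4 * n - 2) * (2 * n - 2).choose (n - 1) := mul_choose_two_mul_self hn0
    _ = (3 * n - 2) * (2 * n - 2).choose (n - 1) + n * (2 * n - 2).choose (n - 1) := by
      rw [← add_mul, show 3 * n - 2 + n = 4 * n - 2 by omega]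
end
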